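/- arXiv:1008.4617 — 10 statements merged into one kernel-verified Lean document; each statement's English description precedes it below -/
import Mathlib

section
/- Let h ∈ C₀(ℤ, ℝ) satisfy h n > 0 for every n ∈ ℤ (equivalently, h is a strictly positive element of the C*-algebra c₀(ℤ)). Then the closure in C₀(ℤ, ℂ) of the h-compressed unit ball, namely of the set { b ∈ C₀(ℤ, ℂ) | ∃ a ∈ C₀(ℤ, ℂ), ‖a‖ ≤ 1 and b n = (h n)^2 * a n for all n }, is compact. -/
open scoped ZeroAtInfty

/-- if `h ∈ C₀(ℤ, ℝ)` is strictly positive pointwise, then the closure of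
the `h`-compressed unit ball `{ b | ∃ a, ‖a‖ ≤ 1 ∧ b n = (h n)^2 * a n }` is compact
in `C₀(ℤ, ℂ)`. -/
theorem isCompact_closure_compressed_unitBall (h : C₀(ℤ, ℝ)) (hpos : ∀ n : ℤ, 0 < h n) :
    IsCompact (closure {b : C₀(ℤ, ℂ) | ∃ a : C₀(ℤ, ℂ), ‖a‖ ≤ 1 ∧
      ∀ n : ℤ, b n = ((h n : ℂ) ^ 2) * a n}) := by
  have hK : IsCompact (Set.pi Set.univ (fun n : ℤ => Metric.closedBall (0 : ℂ) (h n ^ 2))) :=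
    isCompact_univ_pi fun n => isCompact_closedBall _ _
  set K := Set.pi Set.univ (fun n : ℤ => Metric.closedBall (0 : ℂ) (h n ^ 2)) with hKdef
  have hmem : ∀ x : K, ∀ n, ‖x.1 n‖ ≤ h n ^ 2 := fun x n => by
    simpa using x.2 n (Set.mem_univ n)
  have ht : Filter.Tendsto (fun n => h n ^ 2) (Filter.cocompact ℤ) (nhds 0) := by
    simpa using (zero_at_infty h).pow 2
  let Φ : K → C₀(ℤ, ℂ) := fun x =>
    ⟨⟨x.1, continuous_of_discreteTopology⟩, squeeze_zero_norm (hmem x) ht⟩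
  have hΦ : ∀ x n, Φ x n = x.1 n := fun _ _ => rfl
  haveI : CompactSpace K := isCompact_iff_compactSpace.mp hK
  have hcont : Continuous Φ := by
    rw [continuous_iff_continuousAt]
    intro x
    rw [ContinuousAt, ZeroAtInftyContinuousMap.tendsto_iff_tendstoUniformly,
      Metric.tendstoUniformly_iff]
    intro ε hε
    have hfin : ∀ᶠ n in Filter.cofinite, h n ^ 2 < ε / 2 := by
      rw [← Filter.cocompact_eq_cofinite]
      exact ht.eventually_lt_const (by positivity)
    rw [Filter.eventually_cofinite] at hfin
    have h1 : ∀ᶠ y : K in nhds x, ∀ n ∈ {n | ¬ h n ^ 2 < ε / 2}, dist (x.1 n) (y.1 n) < ε := by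
      rw [Filter.eventually_all_finite hfin]
      intro n _
      have hc : Continuous fun y : K => dist (x.1 n) (y.1 n) :=
        continuous_const.dist ((continuous_apply n).comp continuous_subtype_val)
      exact hc.continuousAt.eventually_lt_const (by simpa using hε)
    filter_upwards [h1] with y hy n
    rw [hΦ, hΦ]
    by_cases hn : h n ^ 2 < ε / 2
    · have := norm_sub_le (x.1 n) (y.1 n)
      rw [dist_eq_norm]
      linarith [hmem x n, hmem y n]
    · exact hy n hn
  refine (isCompact_range hcont).closure_of_subset ?_
  rintro b ⟨a, ha, hb⟩
  have hbK : (b : ℤ → ℂ) ∈ K := by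
    intro n _
    have h2 : ‖a n‖ ≤ 1 := (a.toBCF.norm_coe_le_norm n).trans ha
    rw [mem_closedBall_zero_iff, hb, norm_mul, norm_pow, Complex.norm_real, Real.norm_eq_abs,
      sq_abs]
    exact mul_le_of_le_one_right (sq_nonneg _) h2
  exact ⟨⟨b, hbK⟩, ZeroAtInftyContinuousMap.ext fun n => rfl⟩
end

section
/- Let d be a metric on ℤ and let B = { a ∈ C₀(ℤ, ℂ) | ∀ n ∈ ℤ, ‖a n − a (n − 1)‖ ≤ d n (n − 1) } be the Lipschitz ball of consecutive differences. Then B is compact in C₀(ℤ, ℂ) if and only if the family (fun n : ℤ => d n (n − 1)) is summable. -/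
open scoped ZeroAtInfty

open Filter Topology in
theorem aux_exists_S (c : ℤ → ℝ) (hc : ∀ n, 0 ≤ c n) :
    ∃ S : ℤ → ℝ, S 0 = 0 ∧ (∀ n, S n - S (n - 1) = c n) ∧ Monotone S ∧
      (Summable c ↔ ∃ C, ∀ n, |S n| ≤ C) := by
  let S : ℤ → ℝ := fun n => ∑ k ∈ Finset.Ioc 0 n, c k - ∑ k ∈ Finset.Ioc n 0, c k
  have hS0 : S 0 = 0 := by simp [S]
  have hstep : ∀ n, S n - S (n - 1) = c n := by
    intro n
    rcases le_or_gt 1 n with h | h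
    · have e : Finset.Ioc 0 n = insert n (Finset.Ioc 0 (n-1)) := by
        ext x; simp only [Finset.mem_Ioc, Finset.mem_insert]; omega
      have e1 : Finset.Ioc n 0 = ∅ := by
        ext x; simp only [Finset.mem_Ioc, Finset.notMem_empty, iff_false]; omega
      have e2 : Finset.Ioc (n-1) 0 = ∅ := by
        ext x; simp only [Finset.mem_Ioc, Finset.notMem_empty, iff_false]; omega
      simp only [S, e, e1, e2]
      rw [Finset.sum_insert (by simp)]
      simp
    · have e : Finset.Ioc (n-1) 0 = insert n (Finset.Ioc n 0) := by
        ext x; simp only [Finset.mem_Ioc, Finset.mem_insert]; omega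
      have e1 : Finset.Ioc 0 n = ∅ := by
        ext x; simp only [Finset.mem_Ioc, Finset.notMem_empty, iff_false]; omega
      have e2 : Finset.Ioc 0 (n-1) = ∅ := by
        ext x; simp only [Finset.mem_Ioc, Finset.notMem_empty, iff_false]; omega
      simp only [S, e, e1, e2]
      rw [Finset.sum_insert (by simp)]
      simp
  refine ⟨S, hS0, hstep, ?_, ?_, ?_⟩
  · apply monotone_int_of_le_succ
    intro n
    have := hstep (n+1)
    rw [add_sub_cancel_right] at this
    linarith [hc (n+1)]
  · intro hs
    refine ⟨∑' k, c k, fun n => ?_⟩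
    have h1 := hs.sum_le_tsum (Finset.Ioc 0 n) (fun i _ => hc i)
    have h2 := hs.sum_le_tsum (Finset.Ioc n 0) (fun i _ => hc i)
    have h3 := Finset.sum_nonneg (s := Finset.Ioc 0 n) (fun i _ => hc i)
    have h4 := Finset.sum_nonneg (s := Finset.Ioc n 0) (fun i _ => hc i)
    simp only [S]
    rw [abs_le]; constructor <;> linarith
  · rintro ⟨C, hC⟩
    apply Summable.of_nat_of_neg
    · refine (summable_nat_add_iff 1).1 ?_
      refine summable_of_sum_range_le (c := C) (fun n => hc _) fun n => ?_
      have : ∑ i ∈ Finset.range n, c ((i+1 : ℕ) : ℤ) = S n := by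
        induction n with
        | zero => simp [hS0]
        | succ k ih =>
          rw [Finset.sum_range_succ, ih, ← hstep]
          push_cast
          simp
      rw [this]; exact (abs_le.1 (hC _)).2
    · refine summable_of_sum_range_le (c := C) (fun n => hc _) fun n => ?_
      have : ∑ i ∈ Finset.range n, c (-(i : ℤ)) = - S (-n) := by
        induction n with
        | zero => simp [hS0]
        | succ k ih =>
          rw [Finset.sum_range_succ, ih, ← hstep]
          push_cast
          rw [show -((k:ℤ)+1) = -k - 1 by ring]
          ring
      rw [this]; linarith [(abs_le.1 (hC (-n))).1]

open Filter Topology in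
theorem aux_bdd (c S : ℤ → ℝ) (hstep : ∀ n, |S n - S (n - 1)| ≤ c n) (h : ℝ) (M : ℤ)
    (hM : S M = h)
    (hfin : {n : ℤ | |S n - h| < h}.Finite) :
    ∃ a : C₀(ℤ, ℂ), (∀ n : ℤ, ‖a n - a (n - 1)‖ ≤ c n) ∧ h ≤ ‖a‖ := by
  let f : ℤ → ℂ := fun n => ((max 0 (h - |S n - h|) : ℝ) : ℂ)
  have hf : Tendsto f (cocompact ℤ) (𝓝 0) := by
    rw [cocompact_eq_cofinite]
    apply Tendsto.congr' _ tendsto_const_nhds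
    have := hfin.compl_mem_cofinite
    filter_upwards [this] with n hn
    simp only [Set.mem_compl_iff, Set.mem_ofPred_eq, not_lt] at hn
    simp only [f]
    rw [max_eq_left (by linarith)]; simp
  refine ⟨⟨⟨f, continuous_of_discreteTopology⟩, hf⟩, ?_, ?_⟩
  · intro n
    change ‖f n - f (n-1)‖ ≤ c n
    simp only [f]
    rw [← Complex.ofReal_sub, Complex.norm_real, Real.norm_eq_abs]
    refine le_trans ?_ (hstep n)
    refine (abs_max_sub_max_le_max _ _ _ _).trans ?_
    simp only [sub_self, abs_zero]
    refine max_le (abs_nonneg _) ?_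
    have := abs_abs_sub_abs_le_abs_sub (S (n-1) - h) (S n - h)
    calc _ = |(|S (n-1) - h| - |S n - h|)| := by congr 1; ring
      _ ≤ _ := this
      _ = _ := by rw [abs_sub_comm (S n)]; congr 1; ring
  · set a : C₀(ℤ, ℂ) := ⟨⟨f, continuous_of_discreteTopology⟩, hf⟩
    have h1 : ‖a M‖ ≤ ‖a‖ := by
      rw [← ZeroAtInftyContinuousMap.norm_toBCF_eq_norm]
      exact a.toBCF.norm_coe_le_norm M
    refine le_trans ?_ h1
    change _ ≤ ‖f M‖
    simp only [f, hM]
    rw [Complex.norm_real, Real.norm_eq_abs]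
    simp only [sub_self, abs_zero, sub_zero]
    exact (le_max_right _ _).trans (le_abs_self _)

open Filter Topology in
theorem aux_compact (c g : ℤ → ℝ) (hg : Tendsto g cofinite (𝓝 0))
    (hB : ∀ a : C₀(ℤ, ℂ), (∀ n : ℤ, ‖a n - a (n - 1)‖ ≤ c n) → ∀ n, ‖a n‖ ≤ g n) :
    IsCompact {a : C₀(ℤ, ℂ) | ∀ n : ℤ, ‖a n - a (n - 1)‖ ≤ c n} := by
  let K : Set (ℤ → ℂ) := {f | (∀ n, f n ∈ Metric.closedBall 0 (g n)) ∧
    ∀ n, ‖f n - f (n-1)‖ ≤ c n}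
  have hK : IsCompact K := by
    have h1 : IsCompact {f : ℤ → ℂ | ∀ n, f n ∈ Metric.closedBall (0:ℂ) (g n)} :=
      isCompact_pi_infinite (fun n => isCompact_closedBall _ _)
    apply h1.inter_right
    change IsClosed {f : ℤ → ℂ | ∀ n, ‖f n - f (n-1)‖ ≤ c n}
    simp only [Set.ofPred_forall]
    exact isClosed_iInter fun n => isClosed_le (by fun_prop) continuous_const
  have hz : ∀ f : K, Tendsto f.1 (cocompact ℤ) (𝓝 0) := by
    intro f
    rw [cocompact_eq_cofinite]
    refine squeeze_zero_norm (fun n => ?_) hg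
    simpa using f.2.1 n
  let Φ : K → C₀(ℤ, ℂ) := fun f => ⟨⟨f.1, continuous_of_discreteTopology⟩, hz f⟩
  have hΦ : Continuous Φ := by
    rw [continuous_iff_continuousAt]
    intro f
    rw [ContinuousAt, Metric.tendsto_nhds]
    intro ε hε
    have hF : {n | ¬ g n < ε/3}.Finite := by
      have := hg.eventually (gt_mem_nhds (show (0:ℝ) < ε/3 by positivity))
      exact this
    have hnear : ∀ᶠ f' : K in 𝓝 f, ∀ n ∈ {n | ¬ g n < ε/3}, dist (f'.1 n) (f.1 n) < ε/3*2 := by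
      rw [Filter.eventually_all_finite hF]
      intro n _
      have : Continuous (fun f' : K => f'.1 n) :=
        (continuous_apply n).comp continuous_subtype_val
      exact Metric.tendsto_nhds.1 this.continuousAt _ (by positivity)
    filter_upwards [hnear] with f' hf'
    rw [← ZeroAtInftyContinuousMap.dist_toBCF_eq_dist]
    refine lt_of_le_of_lt ((BoundedContinuousFunction.dist_le (C := ε/3*2) (by positivity)).2 ?_)
      (by linarith)
    intro n
    change dist (f'.1 n) (f.1 n) ≤ _
    by_cases hn : g n < ε/3
    · have h1 := f.2.1 n
      have h2 := f'.2.1 n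
      rw [Metric.mem_closedBall] at h1 h2
      have := dist_triangle_right (f'.1 n) (f.1 n) 0
      linarith
    · exact (hf' n hn).le
  have := isCompact_iff_compactSpace.1 hK
  convert isCompact_range hΦ using 1
  ext a
  constructor
  · intro ha
    refine ⟨⟨a, fun n => by simpa using hB a ha n, ha⟩, ?_⟩
    ext n; rfl
  · rintro ⟨f, rfl⟩
    exact f.2.2

/-- for a metric `d` on `ℤ`, the Lipschitz ball of consecutive differences
`{ a ∈ C₀(ℤ, ℂ) | ∀ n, ‖a n - a (n-1)‖ ≤ d n (n-1) }` is compact if and only if the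
distances between consecutive points are summable. -/
theorem isCompact_consecutive_lipschitzBall_iff_summable (d : ℤ → ℤ → ℝ)
    (hd0 : ∀ m n : ℤ, d m n = 0 ↔ m = n)
    (hdsymm : ∀ m n : ℤ, d m n = d n m)
    (hdtri : ∀ m n k : ℤ, d m n ≤ d m k + d k n) :
    IsCompact {a : C₀(ℤ, ℂ) | ∀ n : ℤ, ‖a n - a (n - 1)‖ ≤ d n (n - 1)} ↔
      Summable (fun n : ℤ => d n (n - 1)) := by
  have hnn : ∀ m n, 0 ≤ d m n := by
    intro m n
    have h1 := hdtri m m n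
    rw [(hd0 m m).2 rfl, hdsymm n m] at h1
    linarith
  obtain ⟨S, hS0, hstep, hmono, hsum⟩ := aux_exists_S (fun n => d n (n-1)) (fun n => hnn _ _)
  rw [hsum]
  constructor
  · intro hK
    obtain ⟨R, hR⟩ := hK.isBounded.exists_norm_le
    have hA : BddAbove (Set.range S) := by
      by_contra hA
      obtain ⟨_, ⟨M, rfl⟩, hM⟩ := not_bddAbove_iff.1 hA (max R 0)
      obtain ⟨_, ⟨N, rfl⟩, hN⟩ := not_bddAbove_iff.1 hA (2 * S M)
      obtain ⟨hM1, hM2⟩ := max_lt_iff.1 hM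
      obtain ⟨a, ha, hn⟩ := aux_bdd (fun n => d n (n-1)) S
        (fun n => by rw [hstep, abs_of_nonneg (hnn _ _)]) (S M) M rfl (by
          refine (Set.finite_Icc 0 N).subset fun n hn => ?_
          rw [Set.mem_ofPred_eq, abs_lt] at hn
          constructor
          · by_contra! h
            have := hmono h.le
            linarith
          · by_contra! h
            have := hmono h.le
            linarith)
      linarith [hR a ha]
    have hB : BddBelow (Set.range S) := by
      by_contra hA
      obtain ⟨_, ⟨M, rfl⟩, hM⟩ := not_bddBelow_iff.1 hA (-(max R 0))
      obtain ⟨_, ⟨N, rfl⟩, hN⟩ := not_bddBelow_iff.1 hA (2 * S M)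
      obtain ⟨hM1, hM2⟩ := max_lt_iff.1 (lt_neg_of_lt_neg hM)
      obtain ⟨a, ha, hn⟩ := aux_bdd (fun n => d n (n-1)) (fun n => - S n)
        (fun n => by
          rw [neg_sub_neg, abs_sub_comm, hstep, abs_of_nonneg (hnn _ _)]) (-S M) M rfl (by
          refine (Set.finite_Icc N 0).subset fun n hn => ?_
          rw [Set.mem_ofPred_eq, abs_lt] at hn
          constructor
          · by_contra! h
            have := hmono h.le
            linarith
          · by_contra! h
            have := hmono h.le
            linarith)
      linarith [hR a ha]
    obtain ⟨u, hu⟩ := hA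
    obtain ⟨l, hl⟩ := hB
    refine ⟨max u (-l), fun n => abs_le.2 ⟨?_, ?_⟩⟩
    · have := hl ⟨n, rfl⟩
      linarith [le_max_right u (-l)]
    · exact (hu ⟨n, rfl⟩).trans (le_max_left _ _)
  · rintro ⟨C, hC⟩
    have hbA : BddAbove (Set.range S) := ⟨C, by rintro _ ⟨n, rfl⟩; exact (abs_le.1 (hC n)).2⟩
    have hbB : BddBelow (Set.range S) := ⟨-C, by rintro _ ⟨n, rfl⟩; exact (abs_le.1 (hC n)).1⟩
    have tA := tendsto_atTop_ciSup hmono hbA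
    have tB := tendsto_atBot_ciInf hmono hbB
    set U := ⨆ i, S i
    set L := ⨅ i, S i
    have hU : ∀ n, S n ≤ U := fun n => le_ciSup hbA n
    have hL : ∀ n, L ≤ S n := fun n => ciInf_le hbB n
    apply aux_compact _ (fun n => min (U - S n) (S n - L))
    · rw [Int.cofinite_eq]
      apply Filter.Tendsto.sup
      · have : Filter.Tendsto (fun n => S n - L) Filter.atBot (nhds 0) := by
          simpa using tB.sub_const L
        exact squeeze_zero (fun n => le_min (by linarith [hU n]) (by linarith [hL n]))
          (fun n => min_le_right _ _) this
      · have : Filter.Tendsto (fun n => U - S n) Filter.atTop (nhds 0) := by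
          simpa using tA.const_sub U
        exact squeeze_zero (fun n => le_min (by linarith [hU n]) (by linarith [hL n]))
          (fun n => min_le_left _ _) this
    · intro a ha n
      have hlip : ∀ m : ℤ, ∀ k : ℕ, ‖a (m + k) - a m‖ ≤ S (m + k) - S m := by
        intro m k
        induction k with
        | zero => simp
        | succ k ih =>
          have h1 := ha (m + (k + 1 : ℕ))
          have h2 := hstep (m + (k + 1 : ℕ))
          rw [← h2] at h1
          rw [show m + ((k + 1 : ℕ) : ℤ) - 1 = m + k by push_cast; ring] at h1
          have := norm_sub_le_norm_sub_add_norm_sub (a (m + (k + 1 : ℕ))) (a (m + k)) (a m)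
          linarith
      have hlip' : ∀ m k : ℤ, m ≤ k → ‖a k - a m‖ ≤ S k - S m := by
        intro m k hmk
        have := hlip m (k - m).toNat
        rwa [Int.toNat_of_nonneg (by omega), add_sub_cancel] at this
      have h0 : Filter.Tendsto a Filter.cofinite (nhds 0) := by
        rw [← Filter.cocompact_eq_cofinite]; exact zero_at_infty a
      rw [Int.cofinite_eq, Filter.tendsto_sup] at h0
      apply le_min
      · have h3 := (h0.2.sub_const (a n)).norm
        rw [zero_sub, norm_neg] at h3
        refine le_of_tendsto h3 ?_
        filter_upwards [Filter.eventually_ge_atTop n] with k hk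
        linarith [hlip' n k hk, hU k]
      · have h3 := (h0.1.const_sub (a n)).norm
        rw [sub_zero] at h3
        refine le_of_tendsto h3 ?_
        filter_upwards [Filter.eventually_le_atBot n] with k hk
        linarith [hlip' k n hk, hL k]
end

section
/- Let d be a bounded metric on ℤ, i.e. there exists C with d m n ≤ C for all m, n ∈ ℤ, and let B' = { a ∈ C₀(ℤ, ℂ) | ∀ m n ∈ ℤ, ‖a m − a n‖ ≤ d m n } be the ball of d-Lipschitz functions with constant 1. Then: (i) every a ∈ B' satisfies ‖a‖ ≤ C; (ii) for every h ∈ C₀(ℤ, ℝ) with h n > 0 for all n, the closure in C₀(ℤ, ℂ) of the compressed ball { b | ∃ a ∈ B', ∀ n, b n = (h n)^2 * a n } is compact. -/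
open scoped ZeroAtInfty

open Filter Topology in
theorem compress_tendsto (C : ℝ) (h : C₀(ℤ, ℝ)) (f : ℤ → ℂ) (hf : ∀ n, ‖f n‖ ≤ C) :
    Tendsto (fun n => ((h n : ℂ) ^ 2) * f n) (cocompact ℤ) (𝓝 0) := by
  have h1 : Tendsto (fun n => (h n) ^ 2 * C) (cocompact ℤ) (𝓝 0) := by
    simpa using ((zero_at_infty h).pow 2).mul_const C
  refine squeeze_zero_norm (fun n => ?_) h1
  rw [norm_mul, norm_pow, Complex.norm_real, Real.norm_eq_abs, sq_abs]
  exact mul_le_mul_of_nonneg_left (hf n) (sq_nonneg _)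

/-- Multiplication of a bounded function by `h ^ 2`. -/
noncomputable def compressMap (C : ℝ) (h : C₀(ℤ, ℝ)) (f : {f : ℤ → ℂ // ∀ n, ‖f n‖ ≤ C}) :
    C₀(ℤ, ℂ) where
  toFun n := ((h n : ℂ) ^ 2) * f.1 n
  continuous_toFun := continuous_of_discreteTopology
  zero_at_infty' := compress_tendsto C h f.1 f.2

open Filter Topology in
theorem compressMap_continuous (C : ℝ) (h : C₀(ℤ, ℝ)) : Continuous (compressMap C h) := by
  rw [continuous_iff_continuousAt]
  intro f
  unfold ContinuousAt
  rw [ZeroAtInftyContinuousMap.tendsto_iff_tendstoUniformly, Metric.tendstoUniformly_iff]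
  intro ε hε
  have h1 : Tendsto (fun n => (h n) ^ 2 * (C + C)) (cocompact ℤ) (𝓝 0) := by
    simpa using ((zero_at_infty h).pow 2).mul_const (C + C)
  have h2 := h1.eventually (gt_mem_nhds hε)
  rw [Filter.cocompact_eq_cofinite, Filter.eventually_cofinite] at h2
  have h3 : ∀ᶠ g in 𝓝 f, ∀ n ∈ {n | ¬ (h n) ^ 2 * (C + C) < ε},
      dist (compressMap C h f n) (compressMap C h g n) < ε := by
    rw [Filter.eventually_all_finite h2]
    intro n _
    have hc : Continuous (fun g => dist (compressMap C h f n) (compressMap C h g n)) := by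
      refine continuous_const.dist ?_
      exact continuous_const.mul ((continuous_apply n).comp continuous_subtype_val)
    have := hc.tendsto f
    rw [dist_self] at this
    exact this.eventually (gt_mem_nhds hε)
  filter_upwards [h3] with g hg n
  by_cases hn : (h n) ^ 2 * (C + C) < ε
  · refine lt_of_le_of_lt ?_ hn
    change dist (((h n : ℂ) ^ 2) * f.1 n) (((h n : ℂ) ^ 2) * g.1 n) ≤ _
    rw [dist_eq_norm, ← mul_sub, norm_mul, norm_pow, Complex.norm_real, Real.norm_eq_abs, sq_abs]
    refine mul_le_mul_of_nonneg_left ?_ (sq_nonneg _)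
    exact (norm_sub_le _ _).trans (add_le_add (f.2 n) (g.2 n))
  · exact hg n hn

/-- for a bounded metric `d` on `ℤ` (with bound `C`), every element of the
ball `B' = { a ∈ C₀(ℤ, ℂ) | ∀ m n, ‖a m - a n‖ ≤ d m n }` of `1`-Lipschitz functions
has norm at most `C`, and for every strictly positive `h ∈ C₀(ℤ, ℝ)` the closure of the
`h`-compressed ball `{ b | ∃ a ∈ B', ∀ n, b n = (h n)^2 * a n }` is compact. -/
theorem boundedMetric_lipschitzBall (d : ℤ → ℤ → ℝ)
    (hd0 : ∀ m n : ℤ, d m n = 0 ↔ m = n)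
    (hdsymm : ∀ m n : ℤ, d m n = d n m)
    (hdtri : ∀ m n k : ℤ, d m n ≤ d m k + d k n)
    (C : ℝ) (hC : ∀ m n : ℤ, d m n ≤ C) :
    (∀ a ∈ {a : C₀(ℤ, ℂ) | ∀ m n : ℤ, ‖a m - a n‖ ≤ d m n}, ‖a‖ ≤ C) ∧
      (∀ h : C₀(ℤ, ℝ), (∀ n : ℤ, 0 < h n) →
        IsCompact (closure {b : C₀(ℤ, ℂ) |
          ∃ a ∈ {a : C₀(ℤ, ℂ) | ∀ m n : ℤ, ‖a m - a n‖ ≤ d m n},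
            ∀ n : ℤ, b n = ((h n : ℂ) ^ 2) * a n})) := by
  have hC0 : 0 ≤ C := by
    have := hC 0 0
    rwa [(hd0 0 0).2 rfl] at this
  have key : ∀ a : C₀(ℤ, ℂ), (∀ m n : ℤ, ‖a m - a n‖ ≤ d m n) → ∀ m, ‖a m‖ ≤ C := by
    intro a ha m
    have h1 : Filter.Tendsto (fun n => ‖a m - a n‖) (Filter.cocompact ℤ) (nhds ‖a m - 0‖) :=
      (tendsto_const_nhds.sub (zero_at_infty a)).norm
    rw [sub_zero] at h1
    exact le_of_tendsto' h1 (fun n => (ha m n).trans (hC m n))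
  refine ⟨fun a ha => ?_, fun h _ => ?_⟩
  · rw [← ZeroAtInftyContinuousMap.norm_toBCF_eq_norm]
    exact (BoundedContinuousFunction.norm_le hC0).2 (key a ha)
  · have hK : IsCompact {f : ℤ → ℂ | ∀ n, ‖f n‖ ≤ C} := by
      have := isCompact_univ_pi (fun _ : ℤ => isCompact_closedBall (0 : ℂ) C)
      convert this using 1
      ext f
      simp [Set.mem_pi]
    have : CompactSpace {f : ℤ → ℂ // ∀ n, ‖f n‖ ≤ C} := isCompact_iff_compactSpace.1 hK
    refine (isCompact_range (compressMap_continuous C h)).closure_of_subset ?_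
    rintro b ⟨a, ha, hb⟩
    refine ⟨⟨a, key a ha⟩, ?_⟩
    ext n
    exact (hb n).symm
end

section
/- Let d be a metric on ℤ, let ρ and ω be probability distributions on ℤ, and let μ be a coupling of ρ and ω such that the cost function (fun p : ℤ × ℤ => μ p * d p.1 p.2) is summable. Then for every a ∈ C₀(ℤ, ℂ) satisfying ‖a m − a n‖ ≤ d m n for all m, n ∈ ℤ, one has ‖∑' n, (ρ n − ω n) * a n‖ ≤ ∑' p : ℤ × ℤ, μ p * d p.1 p.2. (This is the inequality 'Connes distance ≤ Wasserstein distance' half of the Kantorovich–Rubinstein duality.) -/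
open scoped ZeroAtInfty

/-- Connes distance ≤ Wasserstein distance.  For a metric `d` on `ℤ`,
probability distributions `ρ, ω` on `ℤ`, a coupling `μ` of `ρ` and `ω` with summable
cost, and any `a ∈ C₀(ℤ, ℂ)` which is `1`-Lipschitz for `d`, one has
`‖∑' n, (ρ n - ω n) * a n‖ ≤ ∑' p, μ p * d p.1 p.2`. -/
theorem connes_le_wasserstein (d : ℤ → ℤ → ℝ)
    (hd0 : ∀ m n : ℤ, d m n = 0 ↔ m = n)
    (hdsymm : ∀ m n : ℤ, d m n = d n m)
    (hdtri : ∀ m n k : ℤ, d m n ≤ d m k + d k n)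
    (ρ ω : ℤ → ℝ)
    (hρpos : ∀ n : ℤ, 0 ≤ ρ n) (hρsum : Summable ρ) (hρ1 : ∑' n : ℤ, ρ n = 1)
    (hωpos : ∀ n : ℤ, 0 ≤ ω n) (hωsum : Summable ω) (hω1 : ∑' n : ℤ, ω n = 1)
    (μ : ℤ × ℤ → ℝ) (hμsum : Summable μ) (hμpos : ∀ p : ℤ × ℤ, 0 ≤ μ p)
    (hμρ : ∀ m : ℤ, ∑' n : ℤ, μ (m, n) = ρ m)
    (hμω : ∀ n : ℤ, ∑' m : ℤ, μ (m, n) = ω n)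
    (hcost : Summable (fun p : ℤ × ℤ => μ p * d p.1 p.2))
    (a : C₀(ℤ, ℂ)) (ha : ∀ m n : ℤ, ‖a m - a n‖ ≤ d m n) :
    ‖∑' n : ℤ, ((ρ n - ω n : ℝ) : ℂ) * a n‖ ≤ ∑' p : ℤ × ℤ, μ p * d p.1 p.2 := by
  have hb : ∀ n, ‖a n‖ ≤ ‖a‖ := fun n => by
    rw [← ZeroAtInftyContinuousMap.norm_toBCF_eq_norm]
    exact a.toBCF.norm_coe_le_norm n
  have hbd : ∀ (ι : Type) (f : ι → ℝ) (g : ι → ℤ), Summable f → (∀ i, 0 ≤ f i) →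
      Summable (fun i => ((f i : ℝ) : ℂ) * a (g i)) := by
    intro ι f g hf hf0
    refine Summable.of_norm_bounded (hf.mul_right ‖a‖) (fun i => ?_)
    rw [norm_mul, Complex.norm_real, Real.norm_of_nonneg (hf0 i)]
    exact mul_le_mul_of_nonneg_left (hb _) (hf0 i)
  have h1 := hbd _ μ Prod.fst hμsum hμpos
  have h2 := hbd _ μ Prod.snd hμsum hμpos
  have e1 : ∑' p : ℤ × ℤ, (μ p : ℂ) * a p.1 = ∑' n, (ρ n : ℂ) * a n := by
    rw [h1.tsum_prod]
    refine tsum_congr (fun m => ?_)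
    dsimp only
    rw [tsum_mul_right, ← Complex.ofReal_tsum, hμρ]
  have e2 : ∑' p : ℤ × ℤ, (μ p : ℂ) * a p.2 = ∑' n, (ω n : ℂ) * a n := by
    rw [← (Equiv.prodComm ℤ ℤ).tsum_eq]
    have h3 : Summable (fun c : ℤ × ℤ => (μ ((Equiv.prodComm ℤ ℤ) c) : ℂ) *
        a ((Equiv.prodComm ℤ ℤ) c).2) := (Equiv.prodComm ℤ ℤ).summable_iff.mpr h2
    rw [h3.tsum_prod]
    refine tsum_congr (fun m => ?_)
    simp only [Equiv.prodComm_apply, Prod.swap_prod_mk]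
    rw [tsum_mul_right, ← Complex.ofReal_tsum, hμω]
  have e3 : ∑' n : ℤ, ((ρ n - ω n : ℝ) : ℂ) * a n
      = ∑' p : ℤ × ℤ, ((μ p : ℂ) * a p.1 - (μ p : ℂ) * a p.2) := by
    have h4 : Summable (fun n => (ρ n : ℂ) * a n) := hbd _ ρ id hρsum hρpos
    have h5 : Summable (fun n => (ω n : ℂ) * a n) := hbd _ ω id hωsum hωpos
    rw [h1.tsum_sub h2, e1, e2, ← h4.tsum_sub h5]
    refine tsum_congr (fun n => ?_)
    simp [sub_mul]
  rw [e3]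
  refine tsum_of_norm_bounded hcost.hasSum (fun p => ?_)
  rw [← mul_sub, norm_mul, Complex.norm_real, Real.norm_of_nonneg (hμpos p)]
  exact mul_le_mul_of_nonneg_left (ha _ _) (hμpos p)
end

section
/- Let ρ and ω be probability distributions on ℤ and let μ be a coupling of ρ and ω such that the cost function (fun p : ℤ × ℤ => μ p * |p.1 − p.2|) is summable. Then for every a ∈ C₀(ℤ, ℂ) one has ‖∑' n, (ρ n − ω n) * a n‖ ≤ 2 * ‖a‖ * ∑' p : ℤ × ℤ, μ p * |p.1 − p.2|. -/
open scoped ZeroAtInfty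

/-- for probability distributions `ρ, ω` on `ℤ` and a coupling `μ` with
summable cost for the usual metric `|m - n|`, every `a ∈ C₀(ℤ, ℂ)` satisfies
`‖∑' n, (ρ n - ω n) * a n‖ ≤ 2 * ‖a‖ * ∑' p, μ p * |p.1 - p.2|`. -/
theorem weak_pairing_le_two_norm_mul_wasserstein
    (ρ ω : ℤ → ℝ)
    (hρpos : ∀ n : ℤ, 0 ≤ ρ n) (hρsum : Summable ρ) (hρ1 : ∑' n : ℤ, ρ n = 1)
    (hωpos : ∀ n : ℤ, 0 ≤ ω n) (hωsum : Summable ω) (hω1 : ∑' n : ℤ, ω n = 1)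
    (μ : ℤ × ℤ → ℝ) (hμsum : Summable μ) (hμpos : ∀ p : ℤ × ℤ, 0 ≤ μ p)
    (hμρ : ∀ m : ℤ, ∑' n : ℤ, μ (m, n) = ρ m)
    (hμω : ∀ n : ℤ, ∑' m : ℤ, μ (m, n) = ω n)
    (hcost : Summable (fun p : ℤ × ℤ => μ p * |(p.1 : ℝ) - (p.2 : ℝ)|))
    (a : C₀(ℤ, ℂ)) :
    ‖∑' n : ℤ, ((ρ n - ω n : ℝ) : ℂ) * a n‖ ≤
      2 * ‖a‖ * ∑' p : ℤ × ℤ, μ p * |(p.1 : ℝ) - (p.2 : ℝ)| := by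
  have hb : ∀ n : ℤ, ‖a n‖ ≤ ‖a‖ := fun n => by
    rw [← ZeroAtInftyContinuousMap.norm_toBCF_eq_norm]
    exact a.toBCF.norm_coe_le_norm n
  have hS : ∀ f : ℤ × ℤ → ℤ, Summable (fun p : ℤ × ℤ => (μ p : ℂ) * a (f p)) := fun f => by
    refine Summable.of_norm_bounded (hμsum.mul_right ‖a‖) (fun p => ?_)
    rw [norm_mul, Complex.norm_real, Real.norm_of_nonneg (hμpos p)]
    exact mul_le_mul_of_nonneg_left (hb _) (hμpos p)
  have h1 : ∀ g : ℤ → ℝ, (∀ n, 0 ≤ g n) → Summable g →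
      Summable (fun n : ℤ => (g n : ℂ) * a n) := fun g hg hs => by
    refine Summable.of_norm_bounded (hs.mul_right ‖a‖) (fun p => ?_)
    rw [norm_mul, Complex.norm_real, Real.norm_of_nonneg (hg p)]
    exact mul_le_mul_of_nonneg_left (hb _) (hg p)
  have e1 : ∑' p : ℤ × ℤ, (μ p : ℂ) * a p.1 = ∑' n : ℤ, (ρ n : ℂ) * a n := by
    rw [(hS Prod.fst).tsum_prod]
    refine tsum_congr fun m => ?_
    change ∑' n : ℤ, (μ (m, n) : ℂ) * a m = _
    rw [tsum_mul_right, ← hμρ m, Complex.ofReal_tsum]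
  have e2 : ∑' p : ℤ × ℤ, (μ p : ℂ) * a p.2 = ∑' n : ℤ, (ω n : ℂ) * a n := by
    rw [← (Equiv.prodComm ℤ ℤ).tsum_eq (fun p : ℤ × ℤ => (μ p : ℂ) * a p.2)]
    refine ((Equiv.prodComm ℤ ℤ).summable_iff.mpr (hS Prod.snd)).tsum_prod.trans ?_
    refine tsum_congr fun m => ?_
    change ∑' n : ℤ, (μ (n, m) : ℂ) * a m = _
    rw [tsum_mul_right, ← hμω m, Complex.ofReal_tsum]
  have e : ∑' n : ℤ, ((ρ n - ω n : ℝ) : ℂ) * a n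
      = ∑' p : ℤ × ℤ, ((μ p : ℂ) * a p.1 - (μ p : ℂ) * a p.2) := by
    rw [(hS Prod.fst).tsum_sub (hS Prod.snd), e1, e2,
      ← (h1 ρ hρpos hρsum).tsum_sub (h1 ω hωpos hωsum)]
    refine tsum_congr fun n => ?_
    push_cast
    ring
  rw [e]
  refine tsum_of_norm_bounded (hcost.hasSum.mul_left (2 * ‖a‖)) fun p => ?_
  rw [← mul_sub, norm_mul, Complex.norm_real, Real.norm_of_nonneg (hμpos p)]
  by_cases hp : p.1 = p.2
  · simp [hp]
  · have hd : (1 : ℝ) ≤ |(p.1 : ℝ) - (p.2 : ℝ)| := by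
      exact_mod_cast Int.one_le_abs (sub_ne_zero.mpr hp)
    have h2 : ‖a p.1 - a p.2‖ ≤ 2 * ‖a‖ := by
      linarith [norm_sub_le (a p.1) (a p.2), hb p.1, hb p.2]
    calc μ p * ‖a p.1 - a p.2‖ ≤ μ p * (2 * ‖a‖) :=
          mul_le_mul_of_nonneg_left h2 (hμpos p)
      _ ≤ μ p * (2 * ‖a‖) * |(p.1 : ℝ) - (p.2 : ℝ)| :=
          le_mul_of_one_le_right (mul_nonneg (hμpos p) (by positivity)) hd
      _ = _ := by ring
end

section
/- The space of probability distributions on ℤ with finite first moment is complete for the Wasserstein distance W₁ associated with the usual metric |m − n| on ℤ. Concretely: let (ρ_j) be a sequence of probability distributions on ℤ with finite first moment which is W₁-Cauchy, i.e. for every ε > 0 there exists J such that for all i, j ≥ J there is a coupling μ of ρ_i and ρ_j with ∑' p : ℤ × ℤ, μ p * |p.1 − p.2| ≤ ε. Then there exists a probability distribution ρ on ℤ with finite first moment such that for every ε > 0 there exists J such that for every j ≥ J there is a coupling μ of ρ_j and ρ with ∑' p : ℤ × ℤ, μ p * |p.1 − p.2| ≤ ε. -/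
/-- `μ` is a coupling of the probability distributions `ρ` and `ω` on `ℤ`. -/
def IsCoupling (ρ ω : ℤ → ℝ) (μ : ℤ × ℤ → ℝ) : Prop :=
  Summable μ ∧ (∀ p : ℤ × ℤ, 0 ≤ μ p) ∧
    (∀ m : ℤ, ∑' n : ℤ, μ (m, n) = ρ m) ∧ (∀ n : ℤ, ∑' m : ℤ, μ (m, n) = ω n)

/-- `ρ` is a probability distribution on `ℤ` with finite first moment. -/
def IsProbFiniteMoment (ρ : ℤ → ℝ) : Prop :=
  (∀ n : ℤ, 0 ≤ ρ n) ∧ Summable ρ ∧ (∑' n : ℤ, ρ n = 1) ∧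
    Summable (fun n : ℤ => |(n : ℝ)| * ρ n)

open Filter Topology in
lemma wc_key (U : Filter ℕ) [U.NeBot] (f : ℕ → ℤ → ℝ) (g : ℤ → ℝ) (c : ℤ) (C : ℝ)
    (s : ℕ → ℝ) (s0 : ℝ)
    (h : ∀ᶠ i in U, (∀ n, 0 ≤ f i n) ∧ Summable (f i) ∧ ∑' n, f i n = s i ∧
      Summable (fun n => f i n * |(n : ℝ) - c|) ∧ ∑' n, f i n * |(n : ℝ) - c| ≤ C)
    (hf : ∀ n, Tendsto (fun i => f i n) U (𝓝 (g n))) (hs : Tendsto s U (𝓝 s0)) :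
    HasSum g s0 := by
  have hg0 : ∀ n, 0 ≤ g n := fun n =>
    ge_of_tendsto (hf n) (h.mono fun i hi => hi.1 n)
  have hT : ∀ T : Finset ℤ, Tendsto (fun i => ∑ n ∈ T, f i n) U (𝓝 (∑ n ∈ T, g n)) :=
    fun T => tendsto_finsetSum _ fun n _ => hf n
  have hle : ∀ T : Finset ℤ, ∑ n ∈ T, g n ≤ s0 := fun T =>
    le_of_tendsto_of_tendsto (hT T) hs (h.mono fun i hi => by
      rw [← hi.2.2.1]
      exact hi.2.1.sum_le_tsum _ fun n _ => hi.1 n)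
  have hgs : Summable g := summable_of_sum_le hg0 hle
  have hR : ∀ R : ℕ, s0 ≤ ∑' n, g n + C / ((R : ℝ) + 1) := by
    intro R
    have hRp : (0 : ℝ) < (R : ℝ) + 1 := by positivity
    set T := Finset.Icc (c - R) (c + R) with hTdef
    have h1 : s0 ≤ ∑ n ∈ T, g n + C / ((R : ℝ) + 1) := by
      refine le_of_tendsto_of_tendsto hs ((hT T).add_const _) (h.mono fun i hi => ?_)
      obtain ⟨h0, hsm, hsi, hc, hcC⟩ := hi
      have hind : HasSum (fun n => if n ∈ T then f i n else 0) (∑ n ∈ T, f i n) := by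
        have := hasSum_sum_of_ne_finset_zero (f := fun n => if n ∈ T then f i n else 0) (s := T)
          (L := SummationFilter.unconditional ℤ) (fun n hn => by simp [hn])
        convert this using 1
        exact Finset.sum_congr rfl fun n hn => by simp [hn]
      have h2 := hind.add (hc.hasSum.div_const ((R : ℝ) + 1))
      have h3 : s i ≤ ∑ n ∈ T, f i n + (∑' n, f i n * |(n : ℝ) - c|) / ((R : ℝ) + 1) := by
        rw [← hsi]
        refine hasSum_le (fun n => ?_) hsm.hasSum h2
        have hnn : 0 ≤ f i n * |(n : ℝ) - c| := mul_nonneg (h0 n) (abs_nonneg _)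
        by_cases hn : n ∈ T
        · simp only [hn, if_true]
          have : 0 ≤ f i n * |(n : ℝ) - c| / ((R : ℝ) + 1) := by positivity
          linarith
        · simp only [hn, if_false, zero_add]
          rw [le_div_iff₀ hRp]
          apply mul_le_mul_of_nonneg_left _ (h0 n)
          have h5 : (R : ℤ) + 1 ≤ |n - c| := by
            rw [hTdef, Finset.mem_Icc] at hn
            by_contra hlt
            have := abs_le.1 (show |n - c| ≤ (R : ℤ) by omega)
            omega
          exact_mod_cast h5
      have h4 : (∑' n, f i n * |(n : ℝ) - c|) / ((R : ℝ) + 1) ≤ C / ((R : ℝ) + 1) := by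
        gcongr
      show s i ≤ _
      linarith
    have := hgs.sum_le_tsum T fun n _ => hg0 n
    linarith
  have hlim : Tendsto (fun R : ℕ => ∑' n, g n + C / ((R : ℝ) + 1)) atTop (𝓝 (∑' n, g n + 0)) := by
    refine tendsto_const_nhds.add ?_
    have := (tendsto_one_div_add_atTop_nhds_zero_nat (𝕜 := ℝ)).const_mul C
    simpa [div_eq_mul_inv] using this
  have h6 : s0 ≤ ∑' n, g n := by simpa using ge_of_tendsto' hlim hR
  have h7 : ∑' n, g n ≤ s0 := hgs.tsum_le_of_sum_le hle
  rw [le_antisymm h6 h7]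
  exact hgs.hasSum

lemma wc_fst (ρ : ℤ → ℝ) (μ : ℤ × ℤ → ℝ) (h0 : ∀ p, 0 ≤ μ p) (hs : Summable μ)
    (hm : ∀ m, ∑' n, μ (m, n) = ρ m) (hρ : Summable fun n : ℤ => |(n : ℝ)| * ρ n) :
    Summable fun p : ℤ × ℤ => |(p.1 : ℝ)| * μ p := by
  rw [summable_prod_of_nonneg (fun p => mul_nonneg (abs_nonneg _) (h0 p))]
  refine ⟨fun m => (hs.prod_factor m).mul_left |(m : ℝ)|, ?_⟩
  have e : (fun m : ℤ => ∑' n : ℤ, |(m : ℝ)| * μ (m, n)) = fun m : ℤ => |(m : ℝ)| * ρ m := by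
    funext m
    rw [← hm m, tsum_mul_left]
  exact e ▸ hρ

lemma wc_swap {ρ ω : ℤ → ℝ} {μ : ℤ × ℤ → ℝ} (h : IsCoupling ρ ω μ) :
    IsCoupling ω ρ (fun p => μ p.swap) :=
  ⟨(Equiv.prodComm ℤ ℤ).summable_iff.2 h.1, fun _ => h.2.1 _, h.2.2.2, h.2.2.1⟩

lemma wc_cost {ρ ω : ℤ → ℝ} {μ : ℤ × ℤ → ℝ} (h : IsCoupling ρ ω μ)
    (hρ : Summable fun n : ℤ => |(n : ℝ)| * ρ n) (hω : Summable fun n : ℤ => |(n : ℝ)| * ω n) :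
    Summable fun p : ℤ × ℤ => μ p * |(p.1 : ℝ) - (p.2 : ℝ)| := by
  have h1 := wc_fst ρ μ h.2.1 h.1 h.2.2.1 hρ
  have hw := wc_swap h
  have h2 := (Equiv.prodComm ℤ ℤ).summable_iff.2 (wc_fst ω _ hw.2.1 hw.1 hw.2.2.1 hω)
  refine Summable.of_nonneg_of_le (fun p => mul_nonneg (h.2.1 p) (abs_nonneg _)) (fun p => ?_)
    (h1.add h2)
  have : μ p * |(p.1 : ℝ) - p.2| ≤ μ p * (|(p.1 : ℝ)| + |(p.2 : ℝ)|) :=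
    mul_le_mul_of_nonneg_left (abs_sub _ _) (h.2.1 p)
  simp only [Function.comp, Equiv.prodComm_apply, Prod.swap_swap, Prod.fst_swap]
  linarith

/-- row cost is at most total cost -/
lemma wc_row {ν : ℤ × ℤ → ℝ} (h0 : ∀ p, 0 ≤ ν p) (hs : Summable ν) (m : ℤ) :
    ∑' n, ν (m, n) ≤ ∑' p, ν p := by
  rw [hs.tsum_prod]
  exact hs.prod.le_tsum m fun k _ => tsum_nonneg fun n => h0 _

open Filter Topology in
lemma wc_lim (U : Ultrafilter ℕ) (f : ℕ → ℝ) (h : ∀ᶠ i in (U : Filter ℕ), f i ∈ Set.Icc (0:ℝ) 1) :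
    ∃ x, Tendsto f U (𝓝 x) := by
  obtain ⟨x, _, hx⟩ := isCompact_Icc.ultrafilter_le_nhds (U.map f) (by
    rw [le_principal_iff]; exact h)
  exact ⟨x, hx⟩

lemma wc_le_one {ρ : ℤ → ℝ} (h : IsProbFiniteMoment ρ) (n : ℤ) : ρ n ≤ 1 := by
  rw [← h.2.2.1]
  exact h.2.1.le_tsum n fun k _ => h.1 k

/-- the space of probability distributions on `ℤ` with finite first moment
is complete for the Wasserstein distance `W₁` associated with the usual metric on `ℤ`:
every `W₁`-Cauchy sequence converges in `W₁` to a probability distribution with finite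
first moment. -/
theorem wasserstein_complete
    (ρseq : ℕ → ℤ → ℝ) (hseq : ∀ j : ℕ, IsProbFiniteMoment (ρseq j))
    (hCauchy : ∀ ε : ℝ, 0 < ε → ∃ J : ℕ, ∀ i j : ℕ, J ≤ i → J ≤ j →
      ∃ μ : ℤ × ℤ → ℝ, IsCoupling (ρseq i) (ρseq j) μ ∧
        ∑' p : ℤ × ℤ, μ p * |(p.1 : ℝ) - (p.2 : ℝ)| ≤ ε) :
    ∃ ρ : ℤ → ℝ, IsProbFiniteMoment ρ ∧
      ∀ ε : ℝ, 0 < ε → ∃ J : ℕ, ∀ j : ℕ, J ≤ j →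
        ∃ μ : ℤ × ℤ → ℝ, IsCoupling (ρseq j) ρ μ ∧
          ∑' p : ℤ × ℤ, μ p * |(p.1 : ℝ) - (p.2 : ℝ)| ≤ ε := by
  classical
  have hU : (Filter.hyperfilter ℕ : Filter ℕ) ≤ Filter.atTop := Nat.hyperfilter_le_atTop
  have hρ : ∀ n, ∃ x, Filter.Tendsto (fun i => ρseq i n) (Filter.hyperfilter ℕ : Filter ℕ) (nhds x) := fun n =>
    wc_lim _ _ (Filter.Eventually.of_forall fun i => ⟨(hseq i).1 n, wc_le_one (hseq i) n⟩)
  choose ρ hρ using hρ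
  have main : ∀ ε : ℝ, 0 < ε → ∃ J : ℕ, ∀ j : ℕ, J ≤ j →
        ∃ μ : ℤ × ℤ → ℝ, IsCoupling (ρseq j) ρ μ ∧
          Summable (fun p : ℤ × ℤ => μ p * |(p.1 : ℝ) - (p.2 : ℝ)|) ∧
          (∀ n, Summable fun m => μ (m, n)) ∧
          ∑' p : ℤ × ℤ, μ p * |(p.1 : ℝ) - (p.2 : ℝ)| ≤ ε := by
    intro ε hε
    obtain ⟨J, hJ⟩ := hCauchy ε hε
    refine ⟨J, fun j hj => ?_⟩
    have : ∀ i, ∃ μ : ℤ × ℤ → ℝ, J ≤ i → IsCoupling (ρseq j) (ρseq i) μ ∧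
        ∑' p : ℤ × ℤ, μ p * |(p.1 : ℝ) - (p.2 : ℝ)| ≤ ε := by
      intro i
      by_cases hi : J ≤ i
      · obtain ⟨μ, h⟩ := hJ j i hj hi
        exact ⟨μ, fun _ => h⟩
      · exact ⟨0, fun h => absurd h hi⟩
    choose μ hμ using this
    have hev : ∀ᶠ i in (Filter.hyperfilter ℕ : Filter ℕ), J ≤ i :=
      hU (Filter.eventually_ge_atTop J)
    have hl : ∀ p, ∃ x, Filter.Tendsto (fun i => μ i p) (Filter.hyperfilter ℕ : Filter ℕ) (nhds x) := by
      intro p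
      refine wc_lim _ _ (hev.mono fun i hi => ?_)
      have hc := (hμ i hi).1
      refine ⟨hc.2.1 p, le_trans ?_ (wc_le_one (hseq j) p.1)⟩
      rw [← hc.2.2.1 p.1]
      exact (hc.1.prod_factor p.1).le_tsum p.2 fun k _ => hc.2.1 _
    choose ν hν using hl
    have hν0 : ∀ p, 0 ≤ ν p := fun p =>
      ge_of_tendsto (hν p) (hev.mono fun i hi => (hμ i hi).1.2.1 p)
    have hcost : ∀ i, J ≤ i → Summable fun p : ℤ × ℤ => μ i p * |(p.1 : ℝ) - (p.2 : ℝ)| :=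
      fun i hi => wc_cost (hμ i hi).1 (hseq j).2.2.2 (hseq i).2.2.2
    have hrow : ∀ m, HasSum (fun n => ν (m, n)) (ρseq j m) := by
      intro m
      refine wc_key (Filter.hyperfilter ℕ : Filter ℕ) (fun i n => μ i (m, n)) _ m ε
        (fun _ => ρseq j m) _ (hev.mono fun i hi => ?_) (fun n => hν _) tendsto_const_nhds
      obtain ⟨hc, hce⟩ := hμ i hi
      have hsm := hcost i hi
      have h1 := hsm.prod_factor m
      have h2 := wc_row (fun p => mul_nonneg (hc.2.1 p) (abs_nonneg _)) hsm m
      simp only [abs_sub_comm (m : ℝ)] at h1 h2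
      exact ⟨fun n => hc.2.1 _, hc.1.prod_factor m, hc.2.2.1 m, h1, h2.trans hce⟩
    have hcol : ∀ n, HasSum (fun m => ν (m, n)) (ρ n) := by
      intro n
      refine wc_key (Filter.hyperfilter ℕ : Filter ℕ) (fun i m => μ i (m, n)) _ n ε
        (fun i => ρseq i n) _ (hev.mono fun i hi => ?_) (fun n => hν _) (hρ n)
      obtain ⟨hc, hce⟩ := hμ i hi
      have hsm := hcost i hi
      have hsw := (Equiv.prodComm ℤ ℤ).summable_iff.2 hsm
      have h1 := hsw.prod_factor n
      have h2 := wc_row (fun p => mul_nonneg (hc.2.1 p.swap) (abs_nonneg _)) hsw n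
      have h3 := (Equiv.prodComm ℤ ℤ).tsum_eq
        (fun p : ℤ × ℤ => μ i p * |(p.1 : ℝ) - (p.2 : ℝ)|)
      exact ⟨fun m => hc.2.1 _, (wc_swap hc).1.prod_factor n, hc.2.2.2 n, h1, h2.trans (h3.le.trans hce)⟩
    have hνs : Summable ν := by
      rw [summable_prod_of_nonneg hν0]
      refine ⟨fun m => (hrow m).summable, ?_⟩
      simp only [fun m => (hrow m).tsum_eq]
      exact (hseq j).2.1
    have hfin : ∀ T : Finset (ℤ × ℤ), ∑ p ∈ T, ν p * |(p.1 : ℝ) - (p.2 : ℝ)| ≤ ε := by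
      intro T
      refine le_of_tendsto (tendsto_finsetSum T fun p _ => (hν p).mul_const _)
        (hev.mono fun i hi => ?_)
      exact ((hcost i hi).sum_le_tsum T fun p _ =>
        mul_nonneg ((hμ i hi).1.2.1 p) (abs_nonneg _)).trans (hμ i hi).2
    have hνc := summable_of_sum_le (fun p => mul_nonneg (hν0 p) (abs_nonneg _)) hfin
    exact ⟨ν, ⟨hνs, hν0, fun m => (hrow m).tsum_eq, fun n => (hcol n).tsum_eq⟩, hνc,
      fun n => (hcol n).summable, hνc.tsum_le_of_sum_le hfin⟩
  refine ⟨ρ, ?_, fun ε hε => ?_⟩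
  · obtain ⟨J, hJ⟩ := main 1 one_pos
    obtain ⟨ν, hc, hcs, hcol, -⟩ := hJ J le_rfl
    have hw := wc_swap hc
    refine ⟨fun n => ge_of_tendsto' (hρ n) fun i => (hseq i).1 n, ?_, ?_, ?_⟩
    · simpa only [hw.2.2.1] using hw.1.prod
    · rw [← (hseq J).2.2.1]
      simp only [← hc.2.2.1, ← hc.2.2.2]
      exact (Summable.tsum_comm (f := fun a b => ν (a, b)) hc.1)
    · have h1 := (wc_fst _ _ hc.2.1 hc.1 hc.2.2.1 (hseq J).2.2.2).add hcs
      have h2 : Summable fun p : ℤ × ℤ => |(p.2 : ℝ)| * ν p := by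
        refine Summable.of_nonneg_of_le (fun p => mul_nonneg (abs_nonneg _) (hc.2.1 p))
          (fun p => ?_) h1
        have h3 : |(p.2 : ℝ)| ≤ |(p.1 : ℝ)| + |(p.1 : ℝ) - p.2| := by
          have := abs_sub (p.1 : ℝ) ((p.1 : ℝ) - p.2)
          simpa using this
        have := mul_le_mul_of_nonneg_right h3 (hc.2.1 p)
        linarith
      have h4 := ((Equiv.prodComm ℤ ℤ).summable_iff.2 h2).prod
      have e : (fun n : ℤ => ∑' m : ℤ, |(n : ℝ)| * ν (m, n)) = fun n : ℤ => |(n : ℝ)| * ρ n := by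
        funext n
        rw [← hc.2.2.2 n, tsum_mul_left]
      rw [← e]
      exact h4
  · obtain ⟨J, hJ⟩ := main ε hε
    refine ⟨J, fun j hj => ?_⟩
    obtain ⟨ν, hc, -, -, hl⟩ := hJ j hj
    exact ⟨ν, hc, hl⟩
end

section
/- Let F be a D-tight set of probability distributions on ℤ with finite first moment. Then every sequence (ρ_j) of elements of F has a subsequence converging pointwise (i.e. at every n ∈ ℤ) to a function ρ : ℤ → ℝ which is again a probability distribution on ℤ, and this ρ has finite first moment. (In particular, D-tight weak*-closed sets are weak*-compact.) -/
/-- `F` is a `D`-tight set of probability distributions on `ℤ` with finite first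
moment: the first-moment tails are uniformly small over `F`. -/
def IsDTight (F : Set (ℤ → ℝ)) : Prop :=
  (∀ ω ∈ F, IsProbFiniteMoment ω) ∧
    ∀ ε : ℝ, 0 < ε → ∃ N : ℕ, ∀ ω ∈ F,
      ∑' n : {n : ℤ // (N : ℤ) < |n|}, |((n : ℤ) : ℝ)| * ω n ≤ ε

theorem aux_tail (ω : ℤ → ℝ) (h : IsProbFiniteMoment ω) (N : ℕ) (ε : ℝ)
    (hε : ∑' n : {n : ℤ // (N : ℤ) < |n|}, |((n : ℤ) : ℝ)| * ω n ≤ ε) (s : Finset ℤ) :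
    ∑ n ∈ s with (N : ℤ) < |n|, |(n : ℝ)| * ω n ≤ ε := by
  refine le_trans ?_ hε
  rw [← Finset.sum_subtype_eq_sum_filter]
  refine Summable.sum_le_tsum (f := fun n : {n : ℤ // (N : ℤ) < |n|} => |((n : ℤ) : ℝ)| * ω n)
    _ (fun i _ => mul_nonneg (abs_nonneg _) (h.1 _)) ?_
  exact h.2.2.2.comp_injective Subtype.val_injective

theorem aux_moment (ω : ℤ → ℝ) (h : IsProbFiniteMoment ω) (N : ℕ) (ε : ℝ)
    (hε : ∑' n : {n : ℤ // (N : ℤ) < |n|}, |((n : ℤ) : ℝ)| * ω n ≤ ε) (s : Finset ℤ) :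
    ∑ n ∈ s, |(n : ℝ)| * ω n ≤ N + ε := by
  rw [← Finset.sum_filter_not_add_sum_filter s (fun n : ℤ => (N : ℤ) < |n|)]
  refine add_le_add ?_ (aux_tail ω h N ε hε s)
  calc ∑ n ∈ s with ¬ (N : ℤ) < |n|, |(n : ℝ)| * ω n
      ≤ ∑ n ∈ s with ¬ (N : ℤ) < |n|, (N : ℝ) * ω n := by
        refine Finset.sum_le_sum fun n hn => mul_le_mul_of_nonneg_right ?_ (h.1 n)
        have := (Finset.mem_filter.1 hn).2
        push Not at this
        exact_mod_cast this
    _ = N * ∑ n ∈ s with ¬ (N : ℤ) < |n|, ω n := by rw [Finset.mul_sum]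
    _ ≤ N * 1 := by
        refine mul_le_mul_of_nonneg_left ?_ (Nat.cast_nonneg N)
        rw [← h.2.2.1]
        exact h.2.1.sum_le_tsum _ (fun i _ => h.1 i)
    _ = N := mul_one _

theorem aux_mass (ω : ℤ → ℝ) (h : IsProbFiniteMoment ω) (N : ℕ) (ε : ℝ)
    (hε : ∑' n : {n : ℤ // (N : ℤ) < |n|}, |((n : ℤ) : ℝ)| * ω n ≤ ε) :
    1 - ε ≤ ∑ n ∈ Finset.Icc (-(N : ℤ)) N, ω n := by
  rw [sub_le_iff_le_add, ← h.2.2.1]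
  refine h.2.1.tsum_le_of_sum_le fun s => ?_
  rw [← Finset.sum_filter_not_add_sum_filter s (fun n : ℤ => (N : ℤ) < |n|)]
  refine add_le_add ?_ (le_trans ?_ (aux_tail ω h N ε hε s))
  · refine Finset.sum_le_sum_of_subset_of_nonneg ?_ (fun i _ _ => h.1 i)
    intro n hn
    have := (Finset.mem_filter.1 hn).2
    push Not at this
    exact Finset.mem_Icc.2 (abs_le.1 this)
  · refine Finset.sum_le_sum fun n hn => le_mul_of_one_le_left (h.1 n) ?_
    have := (Finset.mem_filter.1 hn).2
    have h1 : (1 : ℤ) ≤ |n| := by omega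
    exact_mod_cast h1

/-- every sequence in a `D`-tight set of probability distributions on `ℤ`
with finite first moment admits a subsequence converging pointwise to a probability
distribution on `ℤ`, which again has finite first moment. -/
theorem dtight_seq_has_pointwise_convergent_subseq
    (F : Set (ℤ → ℝ)) (hF : IsDTight F)
    (ρseq : ℕ → ℤ → ℝ) (hρseq : ∀ j : ℕ, ρseq j ∈ F) :
    ∃ φ : ℕ → ℕ, StrictMono φ ∧ ∃ ρ : ℤ → ℝ,
      (∀ n : ℤ, Filter.Tendsto (fun j : ℕ => ρseq (φ j) n) Filter.atTop (nhds (ρ n))) ∧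
      IsProbFiniteMoment ρ := by
  obtain ⟨hP, hT⟩ := hF
  have hK : IsCompact (Set.pi Set.univ (fun _ : ℤ => Set.Icc (0 : ℝ) 1)) :=
    isCompact_univ_pi fun _ => isCompact_Icc
  obtain ⟨ρ, hρ, φ, hφ, hlim⟩ := hK.tendsto_subseq (x := ρseq) (fun j n _ => by
    have h := hP _ (hρseq j)
    refine ⟨h.1 n, ?_⟩
    rw [← h.2.2.1]
    exact h.2.1.le_tsum n (fun i _ => h.1 i))
  have hl : ∀ n : ℤ, Filter.Tendsto (fun j : ℕ => ρseq (φ j) n) Filter.atTop (nhds (ρ n)) :=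
    fun n => tendsto_pi_nhds.1 hlim n
  have h0 : ∀ n, 0 ≤ ρ n := fun n => (hρ n trivial).1
  have hsum1 : ∀ s : Finset ℤ, ∑ n ∈ s, ρ n ≤ 1 := fun s =>
    le_of_tendsto' (tendsto_finsetSum s fun n _ => hl n) fun j => by
      have h := hP _ (hρseq (φ j))
      rw [← h.2.2.1]
      exact h.2.1.sum_le_tsum _ (fun i _ => h.1 i)
  have hs : Summable ρ := summable_of_sum_le h0 hsum1
  refine ⟨φ, hφ, ρ, hl, h0, hs, le_antisymm (hs.tsum_le_of_sum_le hsum1) ?_, ?_⟩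
  · refine le_of_forall_pos_le_add fun ε hε => ?_
    obtain ⟨N, hN⟩ := hT ε hε
    have h1 : 1 - ε ≤ ∑ n ∈ Finset.Icc (-(N : ℤ)) N, ρ n :=
      ge_of_tendsto' (tendsto_finsetSum _ fun n _ => hl n) fun j =>
        aux_mass _ (hP _ (hρseq (φ j))) N ε (hN _ (hρseq (φ j)))
    have h2 := hs.sum_le_tsum (Finset.Icc (-(N : ℤ)) N) (fun i _ => h0 i)
    linarith
  · obtain ⟨N, hN⟩ := hT 1 one_pos
    refine summable_of_sum_le (c := N + 1) (fun n => mul_nonneg (abs_nonneg _) (h0 n)) fun s => ?_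
    exact le_of_tendsto' (tendsto_finsetSum s fun n _ => (hl n).const_mul _) fun j =>
      aux_moment _ (hP _ (hρseq (φ j))) N 1 (hN _ (hρseq (φ j))) s
end

section
/- Let F be a D-tight set of probability distributions on ℤ with finite first moment, let (ρ_j) be a sequence of elements of F, and let ρ be a probability distribution on ℤ such that ρ_j converges to ρ pointwise: for every n ∈ ℤ, (ρ_j) n → ρ n. Then ρ has finite first moment and ρ_j converges to ρ in Wasserstein distance: for every ε > 0 there exists J such that for every j ≥ J there is a coupling μ of ρ_j and ρ with ∑' p : ℤ × ℤ, μ p * |p.1 − p.2| ≤ ε. (On D-tight sets the Wasserstein-W₁ topology coincides with the weak* topology.) -/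
open Finset in
lemma exists_coupling_aux (a b : ℤ → ℝ) (ha : ∀ n, 0 ≤ a n) (hb : ∀ n, 0 ≤ b n)
    (sa : Summable a) (sb : Summable b) (hab : ∑' n, a n = ∑' n, b n)
    (ma : Summable (fun n : ℤ => |(n : ℝ)| * a n)) (mb : Summable (fun n : ℤ => |(n : ℝ)| * b n)) :
    ∃ μ : ℤ × ℤ → ℝ, IsCoupling a b μ ∧
      ∑' p : ℤ × ℤ, μ p * |(p.1 : ℝ) - (p.2 : ℝ)| ≤ ∑' n : ℤ, |(n : ℝ)| * |a n - b n| := by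
  obtain ⟨c, hc⟩ : ∃ c : ℤ → ℝ, c = fun n => min (a n) (b n) := ⟨_, rfl⟩
  have hc0 : ∀ n, 0 ≤ c n := fun n => by rw [hc]; exact le_min (ha n) (hb n)
  have hca : ∀ n, c n ≤ a n := fun n => by rw [hc]; exact min_le_left _ _
  have hcb : ∀ n, c n ≤ b n := fun n => by rw [hc]; exact min_le_right _ _
  have sc : Summable c := Summable.of_nonneg_of_le hc0 hca sa
  obtain ⟨u, hu⟩ : ∃ u : ℤ → ℝ, u = fun n => a n - c n := ⟨_, rfl⟩
  obtain ⟨v, hv⟩ : ∃ v : ℤ → ℝ, v = fun n => b n - c n := ⟨_, rfl⟩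
  have hu0 : ∀ n, 0 ≤ u n := fun n => by rw [hu]; exact sub_nonneg.2 (hca n)
  have hv0 : ∀ n, 0 ≤ v n := fun n => by rw [hv]; exact sub_nonneg.2 (hcb n)
  have su : Summable u := by rw [hu]; exact sa.sub sc
  have sv : Summable v := by rw [hv]; exact sb.sub sc
  obtain ⟨s, hs⟩ : ∃ s : ℝ, s = ∑' n, u n := ⟨_, rfl⟩
  have hs' : s = ∑' n, v n := by
    rw [hs, hu, hv, sa.tsum_sub sc, sb.tsum_sub sc, hab]
  have hs0 : 0 ≤ s := hs ▸ tsum_nonneg hu0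
  have hus : HasSum u s := hs ▸ su.hasSum
  have hvs : HasSum v s := hs' ▸ sv.hasSum
  have uz : s = 0 → ∀ n, u n = 0 := fun h n => by
    rw [h, hasSum_zero_iff_of_nonneg hu0] at hus; exact congrFun hus n
  have vz : s = 0 → ∀ n, v n = 0 := fun h n => by
    rw [h, hasSum_zero_iff_of_nonneg hv0] at hvs; exact congrFun hvs n
  have hss : ∀ x, (s = 0 → x = 0) → s⁻¹ * x * s = x := fun x hx => by
    by_cases h : s = 0
    · simp [hx h]
    · field_simp
  have mu : Summable (fun n : ℤ => |(n : ℝ)| * u n) :=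
    Summable.of_nonneg_of_le (fun n => mul_nonneg (abs_nonneg _) (hu0 n))
      (fun n => mul_le_mul_of_nonneg_left (by rw [hu]; linarith [hc0 n]) (abs_nonneg _)) ma
  have mv : Summable (fun n : ℤ => |(n : ℝ)| * v n) :=
    Summable.of_nonneg_of_le (fun n => mul_nonneg (abs_nonneg _) (hv0 n))
      (fun n => mul_le_mul_of_nonneg_left (by rw [hv]; linarith [hc0 n]) (abs_nonneg _)) mb
  have huv : Summable (fun p : ℤ × ℤ => u p.1 * v p.2) := su.mul_of_nonneg sv hu0 hv0
  have sdiag : Summable (fun p : ℤ × ℤ => if p.1 = p.2 then c p.1 else 0) := by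
    have hi : Function.Injective (fun n : ℤ => (n, n)) := fun x y h => (Prod.ext_iff.1 h).1
    rw [← hi.summable_iff]
    · simpa [Function.comp_def] using sc
    · rintro ⟨x, y⟩ h
      have : x ≠ y := fun e => h ⟨x, by simp [e]⟩
      simp [this]
  refine ⟨fun p => (if p.1 = p.2 then c p.1 else 0) + s⁻¹ * (u p.1 * v p.2),
    ⟨sdiag.add (huv.mul_left _), ?_, ?_, ?_⟩, ?_⟩
  · intro p
    have := mul_nonneg (inv_nonneg.2 hs0) (mul_nonneg (hu0 p.1) (hv0 p.2))
    have := hc0 p.1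
    dsimp only
    split_ifs <;> linarith
  · intro m
    have h1 : HasSum (fun n : ℤ => if m = n then c m else 0) (c m) := by
      simpa [eq_comm] using hasSum_ite_eq m (c m)
    have h2 := h1.add (hvs.mul_left (s⁻¹ * u m))
    rw [hss _ (fun h => uz h m)] at h2
    simp only [← mul_assoc]
    rw [h2.tsum_eq, hu]; ring
  · intro n
    have h1 : HasSum (fun m : ℤ => if m = n then c m else 0) (c n) := by
      have := hasSum_ite_eq n (c n)
      refine this.congr_fun ?_ 
      intro m
      by_cases h : m = n <;> simp [h]
    have h2 := h1.add (hus.mul_left (s⁻¹ * v n))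
    rw [hss _ (fun h => vz h n)] at h2
    rw [← show c n + v n = b n by rw [hv]; ring, ← h2.tsum_eq]
    refine tsum_congr fun m => ?_
    dsimp only
    ring
  · have s1 : Summable (fun p : ℤ × ℤ => (|(p.1 : ℝ)| * u p.1) * v p.2) :=
      mu.mul_of_nonneg sv (fun n => mul_nonneg (abs_nonneg _) (hu0 n)) hv0
    have s2 : Summable (fun p : ℤ × ℤ => u p.1 * (|(p.2 : ℝ)| * v p.2)) :=
      su.mul_of_nonneg mv hu0 (fun n => mul_nonneg (abs_nonneg _) (hv0 n))
    have h1 := mu.hasSum.mul hvs s1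
    have h2 := hus.mul mv.hasSum s2
    have h3 := (h1.add h2).mul_left s⁻¹
    have e : s⁻¹ * ((∑' n : ℤ, |(n : ℝ)| * u n) * s + s * (∑' n : ℤ, |(n : ℝ)| * v n))
        = ∑' n : ℤ, |(n : ℝ)| * |a n - b n| := by
      have e1 : s⁻¹ * (∑' n : ℤ, |(n : ℝ)| * u n) * s = (∑' n : ℤ, |(n : ℝ)| * u n) :=
        hss _ (fun h => by simp [uz h])
      have e2 : s⁻¹ * (∑' n : ℤ, |(n : ℝ)| * v n) * s = (∑' n : ℤ, |(n : ℝ)| * v n) :=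
        hss _ (fun h => by simp [vz h])
      calc _ = s⁻¹ * (∑' n : ℤ, |(n : ℝ)| * u n) * s + s⁻¹ * (∑' n : ℤ, |(n : ℝ)| * v n) * s := by
            ring
        _ = _ := by
          rw [e1, e2, ← mu.tsum_add mv]
          refine tsum_congr fun n => ?_
          rw [← mul_add, hu, hv, hc]
          congr 1
          dsimp only
          rcases le_total (a n) (b n) with h | h
          · rw [min_eq_left h, abs_of_nonpos (by linarith)]; ring
          · rw [min_eq_right h, abs_of_nonneg (by linarith)]; ring
    rw [e] at h3
    rw [← h3.tsum_eq]
    have key : ∀ p : ℤ × ℤ, ((if p.1 = p.2 then c p.1 else 0) + s⁻¹ * (u p.1 * v p.2)) *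
        |(p.1 : ℝ) - (p.2 : ℝ)| ≤
        s⁻¹ * ((|(p.1 : ℝ)| * u p.1) * v p.2 + u p.1 * (|(p.2 : ℝ)| * v p.2)) := by
      rintro ⟨x, y⟩
      have h0 : 0 ≤ s⁻¹ * (u x * v y) :=
        mul_nonneg (inv_nonneg.2 hs0) (mul_nonneg (hu0 x) (hv0 y))
      have h4 := mul_le_mul_of_nonneg_left (abs_sub (x : ℝ) y) h0
      have h5 : (if x = y then c x else 0) * |(x : ℝ) - y| = 0 := by
        by_cases h : x = y <;> simp [h]
      dsimp only
      rw [add_mul, h5]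
      linarith
    refine Summable.tsum_le_tsum key ?_ h3.summable
    refine Summable.of_nonneg_of_le (fun p => mul_nonneg ?_ (abs_nonneg _)) key h3.summable
    have := mul_nonneg (inv_nonneg.2 hs0) (mul_nonneg (hu0 p.1) (hv0 p.2))
    have := hc0 p.1
    dsimp only
    split_ifs <;> linarith

lemma tail_finset_aux (ω : ℤ → ℝ) (h0 : ∀ n, 0 ≤ ω n)
    (hs : Summable (fun n : ℤ => |(n : ℝ)| * ω n)) (N : ℕ) (ε : ℝ)
    (h : ∑' n : {n : ℤ // (N : ℤ) < |n|}, |((n : ℤ) : ℝ)| * ω n ≤ ε) (S : Finset ℤ) :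
    ∑ n ∈ S with (N : ℤ) < |n|, |(n : ℝ)| * ω n ≤ ε := by
  refine le_trans ?_ h
  have hs' : Summable (fun n : {n : ℤ // (N : ℤ) < |n|} => |((n : ℤ) : ℝ)| * ω n) :=
    hs.subtype {n : ℤ | (N : ℤ) < |n|}
  rw [← Finset.sum_subtype_eq_sum_filter]
  exact hs'.sum_le_tsum (S.subtype _) (fun n _ => mul_nonneg (abs_nonneg _) (h0 _))

lemma split_finset_aux (f : ℤ → ℝ) (h0 : ∀ n, 0 ≤ f n) (N : ℕ) (S : Finset ℤ) :
    ∑ n ∈ S, f n ≤ ∑ n ∈ Finset.Icc (-(N : ℤ)) N, f n + ∑ n ∈ S with (N : ℤ) < |n|, f n := by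
  rw [← Finset.sum_filter_add_sum_filter_not S (fun n => (N : ℤ) < |n|), add_comm]
  refine add_le_add_left (Finset.sum_le_sum_of_subset_of_nonneg ?_ fun n _ _ => h0 n) _
  intro n hn
  rw [Finset.mem_filter, not_lt, abs_le] at hn
  exact Finset.mem_Icc.2 hn.2

/-- on a `D`-tight set, pointwise (weak*) convergence of a sequence of
probability distributions on `ℤ` to a probability distribution `ρ` implies that `ρ`
has finite first moment and that the sequence converges to `ρ` in the Wasserstein
distance `W₁`. -/
theorem dtight_pointwise_tendsto_implies_wasserstein_tendsto
    (F : Set (ℤ → ℝ)) (hF : IsDTight F)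
    (ρseq : ℕ → ℤ → ℝ) (hρseq : ∀ j : ℕ, ρseq j ∈ F)
    (ρ : ℤ → ℝ)
    (hρpos : ∀ n : ℤ, 0 ≤ ρ n) (hρsum : Summable ρ) (hρ1 : ∑' n : ℤ, ρ n = 1)
    (hptwise : ∀ n : ℤ, Filter.Tendsto (fun j : ℕ => ρseq j n) Filter.atTop (nhds (ρ n))) :
    Summable (fun n : ℤ => |(n : ℝ)| * ρ n) ∧
      ∀ ε : ℝ, 0 < ε → ∃ J : ℕ, ∀ j : ℕ, J ≤ j →
        ∃ μ : ℤ × ℤ → ℝ, IsCoupling (ρseq j) ρ μ ∧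
          ∑' p : ℤ × ℤ, μ p * |(p.1 : ℝ) - (p.2 : ℝ)| ≤ ε := by
  obtain ⟨hF1, hF2⟩ := hF
  have tails : ∀ ε : ℝ, 0 < ε → ∃ N : ℕ, ∀ S : Finset ℤ,
      (∀ j, ∑ n ∈ S with (N : ℤ) < |n|, |(n : ℝ)| * ρseq j n ≤ ε) ∧
      ∑ n ∈ S with (N : ℤ) < |n|, |(n : ℝ)| * ρ n ≤ ε := by
    intro ε hε
    obtain ⟨N, hN⟩ := hF2 ε hε
    refine ⟨N, fun S => ?_⟩
    have h1 : ∀ j, ∑ n ∈ S with (N : ℤ) < |n|, |(n : ℝ)| * ρseq j n ≤ ε := fun j =>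
      tail_finset_aux _ (hF1 _ (hρseq j)).1 (hF1 _ (hρseq j)).2.2.2 N ε (hN _ (hρseq j)) S
    exact ⟨h1, le_of_tendsto' (tendsto_finsetSum _ fun n _ => (hptwise n).const_mul _) h1⟩
  have hm : Summable (fun n : ℤ => |(n : ℝ)| * ρ n) := by
    obtain ⟨N, hN⟩ := tails 1 one_pos
    have h0 : ∀ n : ℤ, 0 ≤ |(n : ℝ)| * ρ n := fun n => mul_nonneg (abs_nonneg _) (hρpos n)
    refine summable_of_sum_le (c := ∑ n ∈ Finset.Icc (-(N : ℤ)) N, |(n : ℝ)| * ρ n + 1) h0 ?_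
    intro S
    have := split_finset_aux _ h0 N S
    linarith [(hN S).2]
  refine ⟨hm, fun ε hε => ?_⟩
  obtain ⟨N, hN⟩ := tails (ε / 3) (by positivity)
  have hlim : Filter.Tendsto (fun j => ∑ n ∈ Finset.Icc (-(N : ℤ)) N, |(n : ℝ)| * |ρseq j n - ρ n|)
      Filter.atTop (nhds 0) := by
    have : Filter.Tendsto
        (fun j => ∑ n ∈ Finset.Icc (-(N : ℤ)) N, |(n : ℝ)| * |ρseq j n - ρ n|)
        Filter.atTop (nhds (∑ n ∈ Finset.Icc (-(N : ℤ)) N, |(n : ℝ)| * |ρ n - ρ n|)) :=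
      tendsto_finsetSum _ fun n _ => (((hptwise n).sub_const _).abs).const_mul _
    simpa using this
  obtain ⟨J, hJ⟩ := Filter.eventually_atTop.1
    (hlim.eventually (gt_mem_nhds (show (0 : ℝ) < ε / 3 by positivity)))
  refine ⟨J, fun j hj => ?_⟩
  obtain ⟨p0, p1, p2, p3⟩ := hF1 _ (hρseq j)
  obtain ⟨μ, hμ, hle⟩ := exists_coupling_aux (ρseq j) ρ p0 hρpos p1 hρsum (p2.trans hρ1.symm) p3 hm
  refine ⟨μ, hμ, hle.trans ?_⟩
  have h0 : ∀ n : ℤ, 0 ≤ |(n : ℝ)| * |ρseq j n - ρ n| := fun n => by positivity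
  refine Real.tsum_le_of_sum_le h0 fun S => ?_
  have h1 := split_finset_aux _ h0 N S
  have h2 : ∑ n ∈ S with (N : ℤ) < |n|, |(n : ℝ)| * |ρseq j n - ρ n| ≤
      ∑ n ∈ S with (N : ℤ) < |n|, |(n : ℝ)| * ρseq j n +
      ∑ n ∈ S with (N : ℤ) < |n|, |(n : ℝ)| * ρ n := by
    rw [← Finset.sum_add_distrib]
    refine Finset.sum_le_sum fun n _ => ?_
    rw [← mul_add]
    refine mul_le_mul_of_nonneg_left ?_ (abs_nonneg _)
    rw [abs_le]
    constructor <;> linarith [p0 n, hρpos n]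
  linarith [(hN S).1 j, (hN S).2, hJ j hj]
end

section
/- Let A be a complex C*-algebra and let η be a 2π-periodic norm-continuous one-parameter group of *-automorphisms of A. Let b, c ∈ A be such that for every p ∈ ℝ the map k ↦ η k b has derivative η p c at p (i.e. HasDerivAt (fun k => η k b) (η p c) p); c plays the role of ∂b. Then ‖b − (2π)⁻¹ • ∫ k in (-π)..π, η k b‖ ^ 2 ≤ (π ^ 2 / 3) * ‖(2π)⁻¹ • ∫ k in (-π)..π, η k (c * star c)‖, where the integrals are Bochner integrals in A (the integrands are continuous on a compact interval, hence integrable). -/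
open MeasureTheory in
/-- Operator-valued Cauchy-Schwarz for interval integrals. -/
lemma aux_cauchy_schwarz {A : Type*} [CStarAlgebra A] (x : ℝ → A) (hx : Continuous x)
    (g : ℝ → ℝ) (hg : Continuous g) (s t : ℝ) (hst : s ≤ t) (G : ℝ) (hG : 0 < G)
    (hGint : ∫ k in s..t, g k ^ 2 = G) :
    ‖∫ k in s..t, g k • x k‖ ^ 2 ≤ G * ‖∫ k in s..t, x k * star (x k)‖ := by
  let := CStarAlgebra.spectralOrder A
  have := CStarAlgebra.spectralOrderedRing A
  set Y := ∫ k in s..t, g k • x k with hY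
  set P := ∫ k in s..t, x k * star (x k) with hP
  have h0 : 0 ≤ ∫ k in s..t, (G • x k - g k • Y) * star (G • x k - g k • Y) := by
    rw [intervalIntegral.integral_of_le hst]
    exact integral_nonneg fun k => mul_star_self_nonneg _
  have hYs : ∫ k in s..t, g k • star (x k) = star Y := by
    have := ((starL' ℝ : A ≃L[ℝ] A) : A →L[ℝ] A).intervalIntegral_comp_comm
      (f := fun k => g k • x k) (μ := volume) (a := s) (b := t)
      ((hg.smul hx).intervalIntegrable _ _)
    simpa using this
  have h1 : ∫ k in s..t, (g k • x k) * star Y = Y * star Y := by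
    have := ((ContinuousLinearMap.mul ℝ A).flip (star Y)).intervalIntegral_comp_comm
      (f := fun k => g k • x k) (μ := volume) (a := s) (b := t)
      ((hg.smul hx).intervalIntegrable _ _)
    simpa using this
  have h2 : ∫ k in s..t, Y * (g k • star (x k)) = Y * star Y := by
    have := ((ContinuousLinearMap.mul ℝ A) Y).intervalIntegral_comp_comm
      (f := fun k => g k • star (x k)) (μ := volume) (a := s) (b := t)
      ((hg.smul hx.star).intervalIntegrable _ _)
    rw [hYs] at this
    simpa using this
  have h3 : ∫ k in s..t, (g k ^ 2) • (Y * star Y) = G • (Y * star Y) := by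
    rw [intervalIntegral.integral_smul_const, hGint]
  have hexp : ∀ k, (G • x k - g k • Y) * star (G • x k - g k • Y) =
      G ^ 2 • (x k * star (x k)) - G • ((g k • x k) * star Y) - G • (Y * (g k • star (x k)))
        + (g k ^ 2) • (Y * star Y) := by
    intro k
    simp only [star_sub, star_smul, star_trivial, sub_mul, mul_sub, smul_mul_assoc,
      mul_smul_comm, smul_smul]
    module
  have e : ∫ k in s..t, (G • x k - g k • Y) * star (G • x k - g k • Y) =
      G • (G • P - Y * star Y) := by
    simp_rw [hexp]
    rw [intervalIntegral.integral_add, intervalIntegral.integral_sub,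
      intervalIntegral.integral_sub, intervalIntegral.integral_smul, intervalIntegral.integral_smul,
      intervalIntegral.integral_smul, h1, h2, h3]
    · module
    all_goals exact Continuous.intervalIntegrable (by fun_prop) _ _
  rw [e] at h0
  have h4 : 0 ≤ G • P - Y * star Y := by
    have := smul_nonneg (inv_nonneg.2 hG.le) h0
    rwa [smul_smul, inv_mul_cancel₀ hG.ne', one_smul] at this
  have h5 := CStarAlgebra.norm_le_norm_of_nonneg_of_le (mul_star_self_nonneg Y) (sub_nonneg.1 h4)
  rw [CStarRing.norm_self_mul_star, norm_smul, Real.norm_of_nonneg hG.le] at h5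
  rw [sq]; exact h5


/-- for a `2π`-periodic norm-continuous one-parameter group `η` of
*-automorphisms of a complex C*-algebra `A` and elements `b, c ∈ A` with
`d/dk (η k b) = η p c` at every `p` (so `c = ∂b`), one has
`‖b - E(b)‖² ≤ (π²/3) * ‖E(∂b (∂b)*)‖`, where `E(x) = (2π)⁻¹ ∫_{-π}^{π} η k x dk`. -/
theorem norm_sub_expectation_sq_le {A : Type*} [NormedRing A] [StarRing A] [CStarRing A]
    [NormedAlgebra ℂ A] [StarModule ℂ A] [CompleteSpace A]
    (η : ℝ → (A ≃⋆ₐ[ℂ] A))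
    (hgrp : ∀ (k k' : ℝ) (a : A), η (k + k') a = η k (η k' a))
    (hper : ∀ k : ℝ, η (k + 2 * Real.pi) = η k)
    (hcont : ∀ a : A, Continuous fun k : ℝ => η k a)
    (b c : A)
    (hderiv : ∀ p : ℝ, HasDerivAt (fun k : ℝ => η k b) (η p c) p) :
    ‖b - (2 * Real.pi)⁻¹ • ∫ k in (-Real.pi)..Real.pi, η k b‖ ^ 2 ≤
      (Real.pi ^ 2 / 3) * ‖(2 * Real.pi)⁻¹ • ∫ k in (-Real.pi)..Real.pi, η k (c * star c)‖ := by
  let : CStarAlgebra A := {}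
  have hpi := Real.pi_pos
  have hz : ∀ a, η 0 a = a := fun a => (EquivLike.injective (η 0)) (by rw [← hgrp, add_zero])
  have hshift : ∀ a : A, ∫ k in (-Real.pi)..Real.pi, η k a = ∫ k in (0:ℝ)..(2 * Real.pi), η k a := by
    intro a
    have hp : Function.Periodic (fun k => η k a) (2 * Real.pi) := fun k => by
      simp only [hper]
    have := hp.intervalIntegral_add_eq (-Real.pi) 0
    rw [zero_add, show -Real.pi + 2 * Real.pi = Real.pi by ring] at this
    exact this
  have h2pi : η (2 * Real.pi) b = b := by
    have := hper 0
    rw [zero_add] at this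
    rw [this, hz]
  rw [hshift, hshift]
  have hG : ∫ k in (0:ℝ)..(2 * Real.pi), (k - Real.pi) ^ 2 = 2 * Real.pi ^ 3 / 3 := by
    rw [intervalIntegral.integral_comp_sub_right (fun k => k ^ 2), integral_pow]
    push_cast; ring
  have hcs := aux_cauchy_schwarz (fun k => η k c) (hcont c) (fun k => k - Real.pi)
    (by fun_prop) 0 (2 * Real.pi) (by positivity) _ (by positivity) hG
  have hparts := intervalIntegral.integral_smul_deriv_eq_deriv_smul_of_hasDerivAt
    (a := 0) (b := 2 * Real.pi) (u := fun k : ℝ => k - Real.pi) (u' := fun _ => (1:ℝ))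
    (v := fun k => η k b) (v' := fun k => η k c)
    (by fun_prop) (hcont b).continuousOn (fun x _ => (hasDerivAt_id x).sub_const _)
    (fun x _ => hderiv x) (by simp) ((hcont c).intervalIntegrable _ _)
  simp only [one_smul, h2pi, hz] at hparts
  have hb : b - (2 * Real.pi)⁻¹ • ∫ k in (0:ℝ)..(2 * Real.pi), η k b =
      (2 * Real.pi)⁻¹ • ∫ k in (0:ℝ)..(2 * Real.pi), (k - Real.pi) • η k c := by
    rw [hparts, smul_sub, ← sub_smul, smul_smul]
    rw [show (2 * Real.pi)⁻¹ * (2 * Real.pi - Real.pi - (0 - Real.pi)) = 1 by field_simp; ring,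
      one_smul]
  simp only [← map_star, ← map_mul] at hcs
  rw [hb, norm_smul, norm_smul, mul_pow, Real.norm_of_nonneg (by positivity)]
  calc _ ≤ ((2 * Real.pi)⁻¹) ^ 2 * (2 * Real.pi ^ 3 / 3 *
        ‖∫ k in (0:ℝ)..(2 * Real.pi), η k (c * star c)‖) := by gcongr
    _ = _ := by field_simp; try ring
end

section
/- Let A be a complex C*-algebra and let η be a 2π-periodic norm-continuous one-parameter group of *-automorphisms of A. Let b, c ∈ A be such that for every p ∈ ℝ the map k ↦ η k b has derivative η p c at p (i.e. HasDerivAt (fun k => η k b) (η p c) p). For an integer N ≥ 1 let F_N : ℝ → ℝ be the Fejér kernel, F_N k = ∑_{l = -(N-1)}^{N-1} (1 − |l| / N) * Real.cos (l * k), and let the Fejér approximant of order N be b_N := (2π)⁻¹ • ∫ k in (-π)..π, F_N k • η k b (a Bochner integral in A). Then ‖b − b_N‖ ≤ (π / Real.sqrt N) * ‖c‖ + (2 / Real.sqrt N) * ‖b‖. -/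
lemma fj_D (N : ℕ) (k : ℝ) :
    (∑ l ∈ Finset.Icc (-(N : ℤ)) (N : ℤ), Real.cos ((l : ℝ) * k)) * Real.sin (k / 2)
      = Real.sin ((N + 1 / 2) * k) := by
  induction N with
  | zero => simp; ring_nf
  | succ n ih =>
    have h : Finset.Icc (-((n + 1 : ℕ) : ℤ)) ((n + 1 : ℕ) : ℤ)
        = insert (-((n : ℤ) + 1)) (insert ((n : ℤ) + 1) (Finset.Icc (-(n : ℤ)) (n : ℤ))) := by
      ext x; simp only [Finset.mem_Icc, Finset.mem_insert]; push_cast; omega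
    rw [h, Finset.sum_insert, Finset.sum_insert, add_mul, add_mul, ih]
    · push_cast
      have e1 : (-1 + -(n : ℝ)) * k = -(((n : ℝ) + 1) * k) := by ring
      have e2 : (-((n : ℝ) + 1)) * k = -(((n : ℝ) + 1) * k) := by ring
      have e3 : ((n : ℝ) + 1 / 2) * k = ((n : ℝ) + 1) * k - k / 2 := by ring
      have e4 : ((n : ℝ) + 1 + 1 / 2) * k = ((n : ℝ) + 1) * k + k / 2 := by ring
      rw [e2, e3, e4, Real.cos_neg, Real.sin_add, Real.sin_sub]
      ring
    · simp only [Finset.mem_Icc]; omega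
    · simp only [Finset.mem_Icc, Finset.mem_insert]; omega

lemma fj_S (N : ℕ) (k : ℝ) :
    (∑ l ∈ Finset.Icc (-(N : ℤ)) (N : ℤ), ((N : ℝ) - |(l : ℝ)|) * Real.cos ((l : ℝ) * k))
      * Real.sin (k / 2) ^ 2 = Real.sin (N * k / 2) ^ 2 := by
  induction N with
  | zero => simp
  | succ n ih =>
    have h : Finset.Icc (-((n + 1 : ℕ) : ℤ)) ((n + 1 : ℕ) : ℤ)
        = insert (-((n : ℤ) + 1)) (insert ((n : ℤ) + 1) (Finset.Icc (-(n : ℤ)) (n : ℤ))) := by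
      ext x; simp only [Finset.mem_Icc, Finset.mem_insert]; push_cast; omega
    rw [h, Finset.sum_insert, Finset.sum_insert]
    · push_cast
      have e0 : |(n : ℝ) + 1| = n + 1 := abs_of_nonneg (by positivity)
      have hs : ∑ l ∈ Finset.Icc (-(n : ℤ)) (n : ℤ), ((n : ℝ) + 1 - |(l : ℝ)|) * Real.cos ((l : ℝ) * k)
        = ∑ l ∈ Finset.Icc (-(n : ℤ)) (n : ℤ), ((n : ℝ) - |(l : ℝ)|) * Real.cos ((l : ℝ) * k)
          + ∑ l ∈ Finset.Icc (-(n : ℤ)) (n : ℤ), Real.cos ((l : ℝ) * k) := by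
        rw [← Finset.sum_add_distrib]
        exact Finset.sum_congr rfl fun l _ => by ring
      rw [hs, abs_neg, e0, sub_self, zero_mul, zero_mul, zero_add, zero_add, add_mul, ih, sq (Real.sin (k / 2)),
        ← mul_assoc, fj_D]
      have e1 : ((n : ℝ) + 1 / 2) * k = n * k / 2 + n * k / 2 + k / 2 := by ring
      have e2 : ((n : ℝ) + 1) * k / 2 = n * k / 2 + k / 2 := by ring
      rw [e1, e2]
      generalize (n : ℝ) * k / 2 = x
      generalize k / 2 = y
      simp only [Real.sin_add, Real.cos_add]
      have h1 := Real.sin_sq_add_cos_sq x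
      have h2 := Real.sin_sq_add_cos_sq y
      linear_combination (-(Real.sin x)^2) * h2
    · simp only [Finset.mem_Icc]; omega
    · simp only [Finset.mem_Icc, Finset.mem_insert]; omega

noncomputable def fjK (N : ℕ) (k : ℝ) : ℝ :=
  ∑ l ∈ Finset.Icc (-(N : ℤ) + 1) ((N : ℤ) - 1),
    (1 - |(l : ℝ)| / (N : ℝ)) * Real.cos ((l : ℝ) * k)

lemma fjK_eq (N : ℕ) (hN : 1 ≤ N) (k : ℝ) :
    fjK N k * (N * Real.sin (k / 2) ^ 2) = Real.sin (N * k / 2) ^ 2 := by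
  have hN0 : (N : ℝ) ≠ 0 := by positivity
  rw [← fj_S, ← mul_assoc]
  congr 1
  rw [fjK, Finset.sum_mul]
  rw [← Finset.sum_subset (s₁ := Finset.Icc (-(N : ℤ) + 1) ((N : ℤ) - 1))
    (s₂ := Finset.Icc (-(N : ℤ)) (N : ℤ))
    (f := fun l : ℤ => ((N : ℝ) - |(l : ℝ)|) * Real.cos ((l : ℝ) * k))]
  · exact Finset.sum_congr rfl fun l _ => by field_simp
  · intro x; simp only [Finset.mem_Icc]; omega
  · intro x hx hx'
    simp only [Finset.mem_Icc] at hx hx'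
    have : |x| = N := by
      rcases abs_cases x with h | h <;> omega
    have h2 : |(x : ℝ)| = N := by exact_mod_cast this
    rw [h2]; simp

lemma fjK_cont (N : ℕ) : Continuous (fjK N) := by
  unfold fjK; fun_prop

lemma fj_sin (k : ℝ) (hk : |k| ≤ Real.pi) : k ^ 2 ≤ Real.pi ^ 2 * Real.sin (k / 2) ^ 2 := by
  have hp := Real.pi_pos
  have h := Real.mul_abs_le_abs_sin (x := k / 2) (by rw [abs_div, abs_two]; linarith)
  rw [abs_div, abs_two] at h
  have h' : |k| ≤ |Real.pi * Real.sin (k / 2)| := by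
    rw [abs_mul, abs_of_pos hp]
    calc |k| = Real.pi * (2 / Real.pi * (|k| / 2)) := by field_simp
      _ ≤ _ := by gcongr
  have := sq_le_sq.mpr h'
  rwa [mul_pow] at this

lemma fjK_nonneg (N : ℕ) (hN : 1 ≤ N) (k : ℝ) (hk : |k| ≤ Real.pi) : 0 ≤ fjK N k := by
  have hN0 : (0 : ℝ) < N := by positivity
  by_cases h0 : k = 0
  · subst h0
    refine Finset.sum_nonneg fun l hl => ?_
    simp only [Finset.mem_Icc] at hl
    have : |l| ≤ N := by rcases abs_cases l with h | h <;> omega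
    have h2 : |(l : ℝ)| ≤ N := by exact_mod_cast this
    have : |(l : ℝ)| / N ≤ 1 := by rw [div_le_one hN0]; exact h2
    simp; linarith
  · have h1 := fj_sin k hk
    have h2 : 0 < k ^ 2 := by positivity
    have hs : 0 < Real.sin (k / 2) ^ 2 := by
      by_contra h
      have : Real.sin (k / 2) ^ 2 = 0 := le_antisymm (not_lt.mp h) (sq_nonneg _)
      rw [this] at h1; linarith
    have h3 := fjK_eq N hN k
    by_contra h
    have := mul_neg_of_neg_of_pos (not_le.mp h) (mul_pos hN0 hs)
    nlinarith [sq_nonneg (Real.sin (N * k / 2))]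

lemma fjK_le (N : ℕ) (hN : 1 ≤ N) (k : ℝ) (hk : |k| ≤ Real.pi) (h0 : k ≠ 0) :
    fjK N k ≤ Real.pi ^ 2 / N * (k ^ 2)⁻¹ := by
  have hN0 : (0 : ℝ) < N := by positivity
  have h1 := fj_sin k hk
  have h2 : 0 < k ^ 2 := by positivity
  have h3 := fjK_eq N hN k
  have h4 := Real.sin_sq_le_one (N * k / 2)
  have h5 := fjK_nonneg N hN k hk
  rw [← div_eq_mul_inv, le_div_iff₀ h2, le_div_iff₀ hN0]
  calc fjK N k * k ^ 2 * N ≤ fjK N k * (Real.pi ^ 2 * Real.sin (k / 2) ^ 2) * N := by gcongr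
    _ = Real.pi ^ 2 * (fjK N k * (N * Real.sin (k / 2) ^ 2)) := by ring
    _ ≤ Real.pi ^ 2 := by
      rw [h3]; nlinarith [sq_nonneg Real.pi]

lemma fjK_int (N : ℕ) (hN : 1 ≤ N) : ∫ k in (-Real.pi)..Real.pi, fjK N k = 2 * Real.pi := by
  unfold fjK
  rw [intervalIntegral.integral_finsetSum]
  · rw [Finset.sum_eq_single 0]
    · simp; ring
    · intro l _ hl
      have : (l : ℝ) ≠ 0 := by exact_mod_cast hl
      rw [intervalIntegral.integral_const_mul, intervalIntegral.integral_comp_mul_left _ this]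
      simp [Real.sin_int_mul_pi]
    · intro h; simp only [Finset.mem_Icc] at h; omega
  · intro l _; apply Continuous.intervalIntegrable; fun_prop

lemma fj_inv (a b : ℝ) (h : a ≤ b) (h0 : (0 : ℝ) ∉ Set.Icc a b) :
    IntervalIntegrable (fun k : ℝ => (k ^ 2)⁻¹) MeasureTheory.volume a b ∧
    ∫ k in a..b, (k ^ 2)⁻¹ = a⁻¹ - b⁻¹ := by
  have hz : ∀ x ∈ Set.uIcc a b, x ≠ 0 := by
    rw [Set.uIcc_of_le h]; rintro x hx rfl; exact h0 hx
  have hi : IntervalIntegrable (fun k : ℝ => (k ^ 2)⁻¹) MeasureTheory.volume a b := by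
    apply ContinuousOn.intervalIntegrable
    exact ContinuousOn.inv₀ (by fun_prop) fun x hx => pow_ne_zero 2 (hz x hx)
  refine ⟨hi, ?_⟩
  rw [intervalIntegral.integral_eq_sub_of_hasDerivAt (f := fun x => -x⁻¹) _ hi]
  · ring
  · intro x hx
    have := (hasDerivAt_inv (hz x hx)).neg
    rw [neg_neg] at this
    exact this

lemma fj_norm {A : Type*} [NormedRing A] [StarRing A] [CStarRing A]
    [NormedAlgebra ℂ A] [StarModule ℂ A] [CompleteSpace A] (e : A ≃⋆ₐ[ℂ] A) (a : A) :
    ‖e a‖ = ‖a‖ := by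
  letI : CStarAlgebra A := {}
  exact NonUnitalStarAlgHom.norm_map e (EquivLike.injective e) a

/-- for a `2π`-periodic norm-continuous one-parameter group `η` of
*-automorphisms of a complex C*-algebra `A`, elements `b, c ∈ A` with
`d/dk (η k b) = η p c` at every `p` (so `c = ∂b`), and `N ≥ 1`, the Fejér approximant
`b_N = (2π)⁻¹ ∫_{-π}^{π} F_N(k) η_k(b) dk` (where `F_N` is the Fejér kernel) satisfies
`‖b - b_N‖ ≤ (π/√N) ‖c‖ + (2/√N) ‖b‖`. -/
theorem norm_sub_fejer_approximant_le {A : Type*} [NormedRing A] [StarRing A] [CStarRing A]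
    [NormedAlgebra ℂ A] [StarModule ℂ A] [CompleteSpace A]
    (η : ℝ → (A ≃⋆ₐ[ℂ] A))
    (hgrp : ∀ (k k' : ℝ) (a : A), η (k + k') a = η k (η k' a))
    (hper : ∀ k : ℝ, η (k + 2 * Real.pi) = η k)
    (hcont : ∀ a : A, Continuous fun k : ℝ => η k a)
    (b c : A)
    (hderiv : ∀ p : ℝ, HasDerivAt (fun k : ℝ => η k b) (η p c) p)
    (N : ℕ) (hN : 1 ≤ N) :
    ‖b - (2 * Real.pi)⁻¹ •
        ∫ k in (-Real.pi)..Real.pi,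
          (∑ l ∈ Finset.Icc (-(N : ℤ) + 1) ((N : ℤ) - 1),
            (1 - |(l : ℝ)| / (N : ℝ)) * Real.cos ((l : ℝ) * k)) • η k b‖ ≤
      (Real.pi / Real.sqrt N) * ‖c‖ + (2 / Real.sqrt N) * ‖b‖ := by
  have hp := Real.pi_pos
  have hN0 : (0 : ℝ) < N := by positivity
  have hN1 : (1 : ℝ) ≤ N := by exact_mod_cast hN
  set s := Real.sqrt N with hs
  have hss : s * s = N := Real.mul_self_sqrt hN0.le
  have hs1 : 1 ≤ s := by rw [hs]; exact Real.one_le_sqrt.mpr hN1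
  have hs0 : 0 < s := by linarith
  set d := Real.pi / s with hd
  have hd0 : 0 < d := by positivity
  have hdp : d ≤ Real.pi := div_le_self hp.le hs1
  have h0 : η 0 b = b := by
    apply (EquivLike.injective (η 0))
    rw [← hgrp]; simp
  have hlip : ∀ k, ‖b - η k b‖ ≤ ‖c‖ * |k| := by
    intro k
    have := Convex.norm_image_sub_le_of_norm_hasDerivWithin_le (s := Set.univ) (x := k) (y := 0)
      (f := fun k : ℝ => η k b) (f' := fun p => η p c) (C := ‖c‖)
      (fun x _ => (hderiv x).hasDerivWithinAt) (fun x _ => (fj_norm (η x) c).le) convex_univ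
      (Set.mem_univ _) (Set.mem_univ _)
    simpa [h0] using this
  have hbd : ∀ k, ‖b - η k b‖ ≤ 2 * ‖b‖ := by
    intro k
    have := norm_sub_le b (η k b)
    rw [fj_norm] at this; linarith
  have hc := hcont b
  have hF := fjK_cont N
  change ‖b - (2 * Real.pi)⁻¹ • ∫ k in (-Real.pi)..Real.pi, fjK N k • η k b‖ ≤ _
  have hcg : Continuous fun k => fjK N k • (b - η k b) := hF.smul (continuous_const.sub hc)
  have hb : b - (2 * Real.pi)⁻¹ • ∫ k in (-Real.pi)..Real.pi, fjK N k • η k b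
      = (2 * Real.pi)⁻¹ • ∫ k in (-Real.pi)..Real.pi, fjK N k • (b - η k b) := by
    simp_rw [smul_sub]
    have i1 : IntervalIntegrable (fun k => fjK N k • b) MeasureTheory.volume (-Real.pi) Real.pi :=
      Continuous.intervalIntegrable (hF.smul continuous_const) _ _
    have i2 : IntervalIntegrable (fun k => fjK N k • η k b) MeasureTheory.volume
      (-Real.pi) Real.pi := Continuous.intervalIntegrable (hF.smul hc) _ _
    rw [intervalIntegral.integral_sub i1 i2, intervalIntegral.integral_smul_const, fjK_int N hN,
      smul_sub, smul_smul, inv_mul_cancel₀ (by positivity), one_smul]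
  rw [hb, norm_smul, ← intervalIntegral.integral_add_adjacent_intervals (b := -d)
    (hcg.intervalIntegrable _ _) (hcg.intervalIntegrable _ _),
    ← intervalIntegral.integral_add_adjacent_intervals (a := -d) (b := d)
    (hcg.intervalIntegrable _ _) (hcg.intervalIntegrable _ _)]
  have tail : ∀ k, |k| ≤ Real.pi → k ≠ 0 →
      ‖fjK N k • (b - η k b)‖ ≤ (2 * ‖b‖ * (Real.pi ^ 2 / N)) * (k ^ 2)⁻¹ := by
    intro k hk hk0
    have h1 := fjK_nonneg N hN k hk
    rw [norm_smul, Real.norm_of_nonneg h1]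
    calc _ ≤ (Real.pi ^ 2 / N * (k ^ 2)⁻¹) * (2 * ‖b‖) :=
          mul_le_mul (fjK_le N hN k hk hk0) (hbd k) (norm_nonneg _) (by positivity)
      _ = _ := by ring
  have t1 : ‖∫ k in (-Real.pi)..(-d), fjK N k • (b - η k b)‖
      ≤ (2 * ‖b‖ * (Real.pi ^ 2 / N)) * (d⁻¹ - Real.pi⁻¹) := by
    obtain ⟨i1, i2⟩ := fj_inv (-Real.pi) (-d) (by linarith) (by simp [hd0])
    refine (intervalIntegral.norm_integral_le_of_norm_le (by linarith)
      (Filter.Eventually.of_forall fun k hk => tail k (abs_le.mpr ⟨hk.1.le, by linarith [hk.2]⟩)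
        (by linarith [hk.2])) (i1.const_mul _)).trans (le_of_eq ?_)
    rw [intervalIntegral.integral_const_mul, i2, inv_neg, inv_neg]; ring
  have t3 : ‖∫ k in d..Real.pi, fjK N k • (b - η k b)‖
      ≤ (2 * ‖b‖ * (Real.pi ^ 2 / N)) * (d⁻¹ - Real.pi⁻¹) := by
    obtain ⟨i1, i2⟩ := fj_inv d Real.pi (by linarith) (by simp [hd0])
    refine (intervalIntegral.norm_integral_le_of_norm_le (by linarith)
      (Filter.Eventually.of_forall fun k hk => tail k (abs_le.mpr ⟨by linarith [hk.1], hk.2⟩)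
        (by linarith [hk.1])) (i1.const_mul _)).trans (le_of_eq ?_)
    rw [intervalIntegral.integral_const_mul, i2]
  have t2 : ‖∫ k in (-d)..d, fjK N k • (b - η k b)‖ ≤ (‖c‖ * d) * (2 * Real.pi) := by
    refine (intervalIntegral.norm_integral_le_of_norm_le (g := fun k => (‖c‖ * d) * fjK N k)
      (by linarith)
      (Filter.Eventually.of_forall fun k hk => ?_)
        ((hF.intervalIntegrable _ _).const_mul _)).trans ?_
    · have hk' : |k| ≤ d := abs_le.mpr ⟨hk.1.le, hk.2⟩
      have h1 := fjK_nonneg N hN k (hk'.trans hdp)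
      rw [norm_smul, Real.norm_of_nonneg h1, mul_comm]
      exact mul_le_mul_of_nonneg_right ((hlip k).trans (by gcongr)) h1
    · rw [intervalIntegral.integral_const_mul]
      refine mul_le_mul_of_nonneg_left ?_ (by positivity)
      rw [← fjK_int N hN]
      refine intervalIntegral.integral_mono_interval (by linarith) (by linarith) hdp ?_
        (hF.intervalIntegrable _ _)
      refine (MeasureTheory.ae_restrict_iff' measurableSet_Ioc).mpr
        (Filter.Eventually.of_forall fun k hk => ?_)
      exact fjK_nonneg N hN k (abs_le.mpr ⟨hk.1.le, hk.2⟩)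
  have key := (norm_add_le (∫ k in (-Real.pi)..(-d), fjK N k • (b - η k b))
    ((∫ k in (-d)..d, fjK N k • (b - η k b)) + ∫ k in d..Real.pi, fjK N k • (b - η k b))).trans
    (add_le_add t1 ((norm_add_le _ _).trans (add_le_add t2 t3)))
  rw [Real.norm_of_nonneg (by positivity), inv_mul_le_iff₀ (by positivity)]
  refine key.trans ?_
  have e : Real.pi ^ 2 / N * (d⁻¹ - Real.pi⁻¹) ≤ Real.pi / s := by
    rw [hd, ← hss]
    have : Real.pi ^ 2 / (s * s) * ((Real.pi / s)⁻¹ - Real.pi⁻¹)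
        = Real.pi / s - Real.pi / (s * s) := by field_simp
    rw [this]
    have : 0 ≤ Real.pi / (s * s) := by positivity
    linarith
  have e' := mul_le_mul_of_nonneg_left e (show 0 ≤ 4 * ‖b‖ by positivity)
  have e2 : 2 * Real.pi * (d * ‖c‖ + 2 / s * ‖b‖)
    = ‖c‖ * d * (2 * Real.pi) + 4 * ‖b‖ * (Real.pi / s) := by ring
  rw [e2]
  linarith
end
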